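/- Converse for the classical-quantum multiple-access channel (multiple-access phase): Let W : Y₁ × Y₂ → S(H) be a classical-quantum multiple-access channel with finite input alphabets Y₁, Y₂. If the pair of nonnegative reals (R₁, R₂) is achievable with average error — i.e., for every ε > 0 and δ > 0 and all sufficiently large n there exists an (n, J₁, J₂) MAC code with (1/n)·log₂ J₁ ≥ R₁ − δ, (1/n)·log₂ J₂ ≥ R₂ − δ, and average error at most ε — then (R₁, R₂) lies in the closure of the convex hull of the union, over all pairs of probability distributions Q₁ on Y₁ and Q₂ on Y₂, of the sets {(R₁, R₂) : R₁ ≤ I₁, R₂ ≤ I₂, R₁ + R₂ ≤ I₁₂}, where I₁ := Σ_{y₂} Q₂(y₂) χ(Q₁; W(·, y₂)), I₂ := Σ_{y₁} Q₁(y₁) χ(Q₂; W(y₁, ·)), and I₁₂ := χ(Q₁×Q₂; W). -/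

import Mathlib

open scoped BigOperators ComplexOrder

noncomputable section

/-- The Loewner order on operators: `A ≤ B` iff `B - A` is positive semidefinite. -/
def loewnerLE {ι : Type*} [Fintype ι] (A B : Matrix ι ι ℂ) : Prop := (B - A).PosSemidef

/-- A quantum state: a positive semidefinite operator with unit trace. -/
def IsState {ι : Type*} [Fintype ι] (ρ : Matrix ι ι ℂ) : Prop := ρ.PosSemidef ∧ ρ.trace = 1

/-- The von Neumann entropy `S(ρ) = −tr(ρ log₂ ρ)`, computed via eigenvalues. -/
noncomputable def vnEntropy {ι : Type*} [Fintype ι] [DecidableEq ι] (ρ : Matrix ι ι ℂ) : ℝ :=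
  if h : ρ.IsHermitian then -∑ i, h.eigenvalues i * Real.logb 2 (h.eigenvalues i) else 0

/-- The trace norm `‖A‖₁ = tr √(AᴴA)` (sum of singular values). -/
noncomputable def traceNorm {ι : Type*} [Fintype ι] [DecidableEq ι] (A : Matrix ι ι ℂ) : ℝ :=
  ∑ i, Real.sqrt ((Matrix.posSemidef_conjTranspose_mul_self A).1.eigenvalues i)

/-- A probability distribution on a finite set. -/
def IsDist {A : Type*} [Fintype A] (P : A → ℝ) : Prop := (∀ a, 0 ≤ P a) ∧ ∑ a, P a = 1

/-- The Holevo quantity `χ(P;W) = S(PW) − Σ_a P(a) S(W(a))`. -/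
noncomputable def holevo {A ι : Type*} [Fintype A] [Fintype ι] [DecidableEq ι]
    (P : A → ℝ) (W : A → Matrix ι ι ℂ) : ℝ :=
  vnEntropy (∑ a, (P a : ℂ) • W a) - ∑ a, P a * vnEntropy (W a)

/-- Tensor product `M 0 ⊗ ⋯ ⊗ M (n−1)` of matrices, realized on the index set `Fin n → ι`. -/
def tensorPow {n : ℕ} {ι : Type*} [Fintype ι] (M : Fin n → Matrix ι ι ℂ) :
    Matrix (Fin n → ι) (Fin n → ι) ℂ :=
  Matrix.of fun i j => ∏ k, M k (i k) (j k)

/-- The `n`-fold extension `W^{⊗n}(xⁿ) = W(x₁) ⊗ ⋯ ⊗ W(xₙ)` of a cq channel. -/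
def cqPow {A ι : Type*} [Fintype ι] (W : A → Matrix ι ι ℂ) (n : ℕ) (x : Fin n → A) :
    Matrix (Fin n → ι) (Fin n → ι) ℂ :=
  tensorPow fun k => W (x k)

/-- A POVM: positive semidefinite operators summing to at most the identity. -/
def IsPOVM {ι J : Type*} [Fintype ι] [DecidableEq ι] [Fintype J] (D : J → Matrix ι ι ℂ) : Prop :=
  (∀ j, (D j).PosSemidef) ∧ loewnerLE (∑ j, D j) 1

/-- Existence of an `(n, J₁, J₂)` bidirectional broadcast code for the cq channels `W₁`, `W₂`
with average errors `e₁ ≤ ε₁` and `e₂ ≤ ε₂`. -/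
def BroadcastCodeExists {A ι₁ ι₂ : Type*} [Fintype A] [Fintype ι₁] [DecidableEq ι₁]
    [Fintype ι₂] [DecidableEq ι₂]
    (W1 : A → Matrix ι₁ ι₁ ℂ) (W2 : A → Matrix ι₂ ι₂ ℂ)
    (n J1 J2 : ℕ) (ε₁ ε₂ : ℝ) : Prop :=
  ∃ (w : Fin J1 × Fin J2 → Fin n → A)
    (D1 : Fin J2 → Fin J1 → Matrix (Fin n → ι₁) (Fin n → ι₁) ℂ)
    (D2 : Fin J1 → Fin J2 → Matrix (Fin n → ι₂) (Fin n → ι₂) ℂ),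
    (∀ m2, IsPOVM (D1 m2)) ∧ (∀ m1, IsPOVM (D2 m1)) ∧
    (∀ m2, ((J1 : ℝ))⁻¹ * ∑ m1, ((1 - D1 m2 m1) * cqPow W1 n (w (m1, m2))).trace.re ≤ ε₁) ∧
    (∀ m1, ((J2 : ℝ))⁻¹ * ∑ m2, ((1 - D2 m1 m2) * cqPow W2 n (w (m1, m2))).trace.re ≤ ε₂)


/-- Existence of an `(n, J₁, J₂)` code for the cq multiple-access channel `W`
with average error at most `ε`. -/
def MACCodeExists {Y1 Y2 ι : Type*} [Fintype ι] [DecidableEq ι]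
    (W : Y1 → Y2 → Matrix ι ι ℂ) (n J1 J2 : ℕ) (ε : ℝ) : Prop :=
  ∃ (u : Fin J1 → Fin n → Y1) (v : Fin J2 → Fin n → Y2)
    (D : Fin J1 × Fin J2 → Matrix (Fin n → ι) (Fin n → ι) ℂ),
    IsPOVM D ∧
    (1 / ((J1 : ℝ) * (J2 : ℝ))) * ∑ m : Fin J1 × Fin J2,
      ((1 - D m) * tensorPow (fun k => W (u m.1 k) (v m.2 k))).trace.re ≤ ε

end
open Matrix in
/-- Diagonalization data. -/
structure DiagBy {ι : Type*} [Fintype ι] [DecidableEq ι] (ρ U : Matrix ι ι ℂ) (p : ι → ℝ) : Prop where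
  l : Uᴴ * U = 1
  r : U * Uᴴ = 1
  e : ρ = U * Matrix.diagonal (fun i => (p i : ℂ)) * Uᴴ

section basics
open Matrix
variable {ι : Type*} [Fintype ι] [DecidableEq ι]

lemma diagBy_herm {ρ : Matrix ι ι ℂ} (h : ρ.IsHermitian) :
    DiagBy ρ (h.eigenvectorUnitary : Matrix ι ι ℂ) h.eigenvalues := by
  refine ⟨?_, ?_, ?_⟩
  · have := (Matrix.mem_unitaryGroup_iff').1 h.eigenvectorUnitary.2
    simpa [star_eq_conjTranspose] using this
  · have := (Matrix.mem_unitaryGroup_iff).1 h.eigenvectorUnitary.2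
    simpa [star_eq_conjTranspose] using this
  · have := h.spectral_theorem
    rw [Unitary.conjStarAlgAut_apply] at this
    simpa [star_eq_conjTranspose, Function.comp_def] using this

lemma DiagBy.isHermitian {ρ U : Matrix ι ι ℂ} {p : ι → ℝ} (h : DiagBy ρ U p) : ρ.IsHermitian := by
  rw [h.e, IsHermitian, conjTranspose_mul, conjTranspose_mul, conjTranspose_conjTranspose,
    diagonal_conjTranspose, Matrix.mul_assoc]
  congr 3
  ext i; simp

lemma DiagBy.vn {ρ U : Matrix ι ι ℂ} {p : ι → ℝ} (h : DiagBy ρ U p) :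
    vnEntropy ρ * Real.log 2 = ∑ i, Real.negMulLog (p i) := by
  have hH := h.isHermitian
  have hl : Real.log 2 ≠ 0 := (Real.log_pos one_lt_two).ne'
  have key : (Finset.univ.val.map hH.eigenvalues) = Finset.univ.val.map p := by
    have h1 := hH.roots_charpoly_eq_eigenvalues
    have h2 : ρ.charpoly = ∏ i, (Polynomial.X - Polynomial.C (p i : ℂ)) := by
      rw [← Matrix.charpoly_diagonal]
      have : ρ.charpoly = (Uᴴ * (U * Matrix.diagonal (fun i => (p i : ℂ)))).charpoly := by
        rw [Matrix.charpoly_mul_comm, ← h.e]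
      rw [this, ← Matrix.mul_assoc, h.l, Matrix.one_mul]
    rw [h2, Polynomial.roots_prod _ _ (Finset.prod_ne_zero_iff.2 fun i _ => Polynomial.X_sub_C_ne_zero _)] at h1
    simp only [Polynomial.roots_X_sub_C, Multiset.bind_singleton] at h1
    have h3 := congrArg (Multiset.map Complex.re) h1
    simpa [Multiset.map_map, Function.comp_def] using h3.symm
  have : ∑ i, Real.negMulLog (hH.eigenvalues i) = ∑ i, Real.negMulLog (p i) := by
    have := congrArg (fun s => (Multiset.map Real.negMulLog s).sum) key
    simpa [Multiset.map_map, Function.comp_def] using this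
  rw [← this, vnEntropy, dif_pos hH, neg_mul, Finset.sum_mul, ← Finset.sum_neg_distrib]
  refine Finset.sum_congr rfl fun i _ => ?_
  rw [Real.negMulLog, Real.logb]
  field_simp

lemma DiagBy.conj {ρ U : Matrix ι ι ℂ} {p : ι → ℝ} (h : DiagBy ρ U p) :
    Uᴴ * ρ * U = Matrix.diagonal (fun i => (p i : ℂ)) := by
  rw [h.e]
  calc _ = (Uᴴ * U) * Matrix.diagonal (fun i => (p i : ℂ)) * (Uᴴ * U) := by
        simp only [Matrix.mul_assoc]
    _ = _ := by rw [h.l]; simp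

lemma DiagBy.trace {ρ U : Matrix ι ι ℂ} {p : ι → ℝ} (h : DiagBy ρ U p) :
    ρ.trace = ((∑ i, p i : ℝ) : ℂ) := by
  rw [h.e, Matrix.trace_mul_comm, ← Matrix.mul_assoc, h.l, Matrix.one_mul, Matrix.trace_diagonal]
  simp

lemma DiagBy.sum_one {ρ U : Matrix ι ι ℂ} {p : ι → ℝ} (h : DiagBy ρ U p) (ht : ρ.trace = 1) :
    ∑ i, p i = 1 := by
  have := h.trace.symm.trans ht
  exact_mod_cast this

lemma DiagBy.nonneg {ρ U : Matrix ι ι ℂ} {p : ι → ℝ} (h : DiagBy ρ U p) (hρ : ρ.PosSemidef) (i : ι) :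
    0 ≤ p i := by
  have h1 := (hρ.conjTranspose_mul_mul_same U).diag_nonneg (i := i)
  rw [h.conj] at h1
  simpa using h1

lemma DiagBy.pos {ρ U : Matrix ι ι ℂ} {p : ι → ℝ} (h : DiagBy ρ U p) (hρ : ρ.PosDef) (i : ι) :
    0 < p i := by
  have hi : Function.Injective U.mulVec := by
    intro x y hxy
    have := congrArg (fun z => Uᴴ *ᵥ z) hxy
    simpa [Matrix.mulVec_mulVec, h.l] using this
  have h1 := (hρ.conjTranspose_mul_mul_same hi).diag_pos (i := i)
  rw [h.conj] at h1
  simpa using h1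

/-- matrix logarithm -/
noncomputable def Lg (σ : Matrix ι ι ℂ) : Matrix ι ι ℂ :=
  if h : σ.IsHermitian then (h.eigenvectorUnitary : Matrix ι ι ℂ) *
    Matrix.diagonal (fun i => ((Real.log (h.eigenvalues i) : ℝ) : ℂ)) *
      (h.eigenvectorUnitary : Matrix ι ι ℂ)ᴴ else 0

/-- relative entropy -/
noncomputable def Dr (ρ σ : Matrix ι ι ℂ) : ℝ :=
  - (vnEntropy ρ * Real.log 2) - (ρ * Lg σ).trace.re

/-- overlap coefficients -/
noncomputable def ov (U V : Matrix ι ι ℂ) (i j : ι) : ℝ := Complex.normSq ((Uᴴ * V) i j)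

lemma ov_nonneg (U V : Matrix ι ι ℂ) (i j : ι) : 0 ≤ ov U V i j := Complex.normSq_nonneg _

lemma ov_sum_right {U V : Matrix ι ι ℂ} (hU : Uᴴ * U = 1) (hV : V * Vᴴ = 1) (i : ι) :
    ∑ j, ov U V i j = 1 := by
  have h : (Uᴴ * V) * (Uᴴ * V)ᴴ = 1 := by
    rw [conjTranspose_mul, conjTranspose_conjTranspose]
    calc _ = Uᴴ * (V * Vᴴ) * U := by simp only [Matrix.mul_assoc]
      _ = 1 := by rw [hV, Matrix.mul_one, hU]
  have h2 := congrFun (congrFun h i) i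
  rw [Matrix.mul_apply, Matrix.one_apply_eq] at h2
  simp only [conjTranspose_apply, ← starRingEnd_apply, Complex.mul_conj] at h2
  unfold ov
  exact_mod_cast h2

lemma ov_sum_left {U V : Matrix ι ι ℂ} (hU : U * Uᴴ = 1) (hV : Vᴴ * V = 1) (j : ι) :
    ∑ i, ov U V i j = 1 := by
  have h : (Uᴴ * V)ᴴ * (Uᴴ * V) = 1 := by
    rw [conjTranspose_mul, conjTranspose_conjTranspose]
    calc _ = Vᴴ * (U * Uᴴ) * V := by simp only [Matrix.mul_assoc]
      _ = 1 := by rw [hU, Matrix.mul_one, hV]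
  have h2 := congrFun (congrFun h j) j
  rw [Matrix.mul_apply, Matrix.one_apply_eq] at h2
  simp only [conjTranspose_apply, ← starRingEnd_apply, mul_comm _ ((Uᴴ * V) _ _), Complex.mul_conj] at h2
  unfold ov
  exact_mod_cast h2

lemma DiagBy.diag_conj {ρ U V : Matrix ι ι ℂ} {p : ι → ℝ} (h : DiagBy ρ U p) (j : ι) :
    (Vᴴ * ρ * V) j j = ((∑ i, ov U V i j * p i : ℝ) : ℂ) := by
  have : Vᴴ * ρ * V = (Uᴴ * V)ᴴ * Matrix.diagonal (fun i => (p i : ℂ)) * (Uᴴ * V) := by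
    rw [conjTranspose_mul, conjTranspose_conjTranspose, h.e]
    simp only [Matrix.mul_assoc]
  rw [this, Matrix.mul_apply]
  push_cast
  refine Finset.sum_congr rfl fun i _ => ?_
  rw [Matrix.mul_diagonal, conjTranspose_apply, ov, ← Complex.mul_conj, starRingEnd_apply]
  ring

lemma DiagBy.trace_mul {ρ U V : Matrix ι ι ℂ} {p : ι → ℝ} (h : DiagBy ρ U p) (q : ι → ℝ) :
    (ρ * (V * Matrix.diagonal (fun i => (q i : ℂ)) * Vᴴ)).trace =
      ((∑ j, (∑ i, ov U V i j * p i) * q j : ℝ) : ℂ) := by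
  have : (ρ * (V * Matrix.diagonal (fun i => (q i : ℂ)) * Vᴴ)).trace =
      (Vᴴ * ρ * V * Matrix.diagonal (fun i => (q i : ℂ))).trace := by
    rw [← Matrix.mul_assoc, Matrix.trace_mul_comm]
    simp only [Matrix.mul_assoc]
  rw [this, Matrix.trace]
  push_cast
  refine Finset.sum_congr rfl fun i _ => ?_
  rw [Matrix.diag_apply, Matrix.mul_diagonal, h.diag_conj]
  push_cast; rfl

lemma Lg_self {σ : Matrix ι ι ℂ} (h : σ.IsHermitian) :
    (σ * Lg σ).trace.re = - (vnEntropy σ * Real.log 2) := by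
  have hd := diagBy_herm h
  rw [Lg, dif_pos h, hd.vn]
  have : (σ * ((h.eigenvectorUnitary : Matrix ι ι ℂ) *
    Matrix.diagonal (fun i => ((Real.log (h.eigenvalues i) : ℝ) : ℂ)) *
      (h.eigenvectorUnitary : Matrix ι ι ℂ)ᴴ)).trace =
      ((h.eigenvectorUnitary : Matrix ι ι ℂ)ᴴ * σ * (h.eigenvectorUnitary : Matrix ι ι ℂ) * Matrix.diagonal (fun i => ((Real.log (h.eigenvalues i) : ℝ) : ℂ))).trace := by
    rw [← Matrix.mul_assoc, Matrix.trace_mul_comm]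
    simp only [Matrix.mul_assoc]
  rw [this, hd.conj, diagonal_mul_diagonal, trace_diagonal, ← Finset.sum_neg_distrib, Complex.re_sum]
  refine Finset.sum_congr rfl fun i _ => ?_
  rw [← Complex.ofReal_mul, Complex.ofReal_re, Real.negMulLog]
  ring

/-- scalar divergence -/
noncomputable def Fs (p q : ℝ) : ℝ := p * Real.log p - p * Real.log q - p + q

lemma Dr_eq {ρ σ : Matrix ι ι ℂ} (hρ : ρ.IsHermitian) (hσ : σ.IsHermitian) (ht : ρ.trace = σ.trace) :
    Dr ρ σ = ∑ i, ∑ j, ov (hρ.eigenvectorUnitary : Matrix ι ι ℂ) hσ.eigenvectorUnitary i j *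
      Fs (hρ.eigenvalues i) (hσ.eigenvalues j) := by
  have h1 := diagBy_herm hρ
  have h2 := diagBy_herm hσ
  rw [Dr, Lg, dif_pos hσ, h1.trace_mul, h1.vn, Complex.ofReal_re]
  rw [h1.trace, h2.trace] at ht
  have ht' : ∑ i, hρ.eigenvalues i = ∑ i, hσ.eigenvalues i := by exact_mod_cast ht
  set U := (hρ.eigenvectorUnitary : Matrix ι ι ℂ)
  set V := (hσ.eigenvectorUnitary : Matrix ι ι ℂ)
  have e1 : ∀ f : ι → ℝ, ∑ i, ∑ j, ov U V i j * f i = ∑ i, f i := fun f => by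
    simp_rw [← Finset.sum_mul, ov_sum_right h1.l h2.r, one_mul]
  have e2 : ∀ f : ι → ℝ, ∑ i, ∑ j, ov U V i j * f j = ∑ i, f i := fun f => by
    rw [Finset.sum_comm]
    simp_rw [← Finset.sum_mul, ov_sum_left h1.r h2.l, one_mul]
  have e3 : ∑ i, ∑ j, ov U V i j * Fs (hρ.eigenvalues i) (hσ.eigenvalues j)
      = ∑ i, ∑ j, ov U V i j * (hρ.eigenvalues i * Real.log (hρ.eigenvalues i))
        - ∑ i, ∑ j, ov U V i j * hρ.eigenvalues i * Real.log (hσ.eigenvalues j)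
        - ∑ i, ∑ j, ov U V i j * hρ.eigenvalues i + ∑ i, ∑ j, ov U V i j * hσ.eigenvalues j := by
    simp only [← Finset.sum_sub_distrib, ← Finset.sum_add_distrib]
    refine Finset.sum_congr rfl fun i _ => Finset.sum_congr rfl fun j _ => ?_
    rw [Fs]; ring
  rw [e3, e1 (fun i => hρ.eigenvalues i * Real.log (hρ.eigenvalues i)), e1, e2, ht']
  rw [Finset.sum_comm (f := fun i j => ov U V i j * hρ.eigenvalues i * Real.log (hσ.eigenvalues j))]
  simp_rw [Finset.sum_mul, Real.negMulLog, neg_mul, Finset.sum_neg_distrib]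
  ring

end basics
section integral
open MeasureTheory Set Filter Topology

/-- integrand -/
noncomputable def Gs (p q t : ℝ) : ℝ := (p - q) ^ 2 / (t * q + p) * (t / (1 + t) ^ 2)

lemma Gs_anti {p q : ℝ} (hp : 0 < p) (hq : 0 < q) (t : ℝ) (ht : 0 ≤ t) :
    HasDerivAt (fun t => p * (Real.log (1 + t) + Real.log q - Real.log (t * q + p)) - (q - p) / (1 + t))
      (Gs p q t) t := by
  have h1 : 1 + t ≠ 0 := by positivity
  have h2 : t * q + p ≠ 0 := by positivity
  have d1 : HasDerivAt (fun t : ℝ => 1 + t) 1 t := by simpa using (hasDerivAt_id t).const_add 1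
  have d2 : HasDerivAt (fun t : ℝ => t * q + p) q t := by
    simpa using ((hasDerivAt_id t).mul_const q).add_const p
  have d3 := ((((d1.log h1).add_const (Real.log q)).sub (d2.log h2)).const_mul p).sub
    ((hasDerivAt_const t (q - p)).div d1 h1)
  refine d3.congr_deriv ?_
  rw [Gs]
  field_simp
  ring

lemma Gs_lim {p q : ℝ} (hp : 0 < p) (hq : 0 < q) :
    Tendsto (fun t => p * (Real.log (1 + t) + Real.log q - Real.log (t * q + p)) - (q - p) / (1 + t))
      atTop (𝓝 0) := by
  have a1 : Tendsto (fun t : ℝ => (1 + t)⁻¹) atTop (𝓝 0) :=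
    tendsto_inv_atTop_zero.comp (tendsto_atTop_add_const_left _ _ tendsto_id)
  have a2 : Tendsto (fun t : ℝ => (q - p) / (1 + t)) atTop (𝓝 0) := by
    simpa [div_eq_mul_inv] using a1.const_mul (q - p)
  have a3 : Tendsto (fun t : ℝ => 1 + ((p - q) / q) * (1 + t)⁻¹) atTop (𝓝 1) := by
    simpa using (a1.const_mul ((p - q) / q)).const_add 1
  have a4 := (a3.log one_ne_zero).const_mul (-p)
  rw [Real.log_one, mul_zero] at a4
  have a5 := a4.sub a2
  rw [sub_zero] at a5
  refine a5.congr' ?_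
  filter_upwards [eventually_ge_atTop 0] with t ht
  have h1 : (0:ℝ) < 1 + t := by positivity
  have h2 : (0:ℝ) < t * q + p := by positivity
  have : 1 + ((p - q) / q) * (1 + t)⁻¹ = (t * q + p) / (q * (1 + t)) := by
    field_simp; ring
  rw [this, Real.log_div h2.ne' (by positivity), Real.log_mul hq.ne' h1.ne']
  ring

lemma Gs_nonneg {p q : ℝ} (hp : 0 < p) (hq : 0 < q) (t : ℝ) (ht : 0 < t) : 0 ≤ Gs p q t := by
  unfold Gs; positivity

lemma Gs_cont {p q : ℝ} (hp : 0 < p) (hq : 0 < q) :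
    ContinuousWithinAt (fun t => p * (Real.log (1 + t) + Real.log q - Real.log (t * q + p)) - (q - p) / (1 + t))
      (Ici 0) 0 := (Gs_anti hp hq 0 le_rfl).continuousAt.continuousWithinAt

lemma Gs_int {p q : ℝ} (hp : 0 < p) (hq : 0 < q) : IntegrableOn (Gs p q) (Ioi 0) :=
  integrableOn_Ioi_deriv_of_nonneg (Gs_cont hp hq) (fun t ht => Gs_anti hp hq t (le_of_lt ht))
    (fun t ht => Gs_nonneg hp hq t ht) (Gs_lim hp hq)

lemma Gs_integral {p q : ℝ} (hp : 0 < p) (hq : 0 < q) : ∫ t in Ioi 0, Gs p q t = Fs p q := by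
  rw [integral_Ioi_of_hasDerivAt_of_nonneg (Gs_cont hp hq) (fun t ht => Gs_anti hp hq t (le_of_lt ht))
    (fun t ht => Gs_nonneg hp hq t ht) (Gs_lim hp hq), Fs]
  simp
  ring

end integral

section variational
open Matrix MeasureTheory Set
variable {ι : Type*} [Fintype ι] [DecidableEq ι]

/-- Kosaki functional -/
noncomputable def Kf (t : ℝ) (ρ σ Y : Matrix ι ι ℂ) : ℝ :=
  2 * ((ρ - σ) * Y).trace.re - t * (σ * (Y * Yᴴ)).trace.re - (ρ * (Yᴴ * Y)).trace.re

lemma Kf_eq {ρ σ U V Y : Matrix ι ι ℂ} {p q : ι → ℝ} (hρ : DiagBy ρ U p) (hσ : DiagBy σ V q) (t : ℝ) :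
    Kf t ρ σ Y = ∑ i, ∑ j, (2 * (p i - q j) * ((Uᴴ * V) i j * (Vᴴ * Y * U) j i).re
      - (t * q j + p i) * Complex.normSq ((Vᴴ * Y * U) j i)) := by
  set y := Vᴴ * Y * U with hy
  have hY : Y = V * y * Uᴴ := by
    rw [hy]
    calc Y = (V * Vᴴ) * Y * (U * Uᴴ) := by rw [hρ.r, hσ.r]; simp
      _ = _ := by simp only [Matrix.mul_assoc]
  set P := Matrix.diagonal (fun i => (p i : ℂ)) with hP
  set Q := Matrix.diagonal (fun i => (q i : ℂ)) with hQ
  have t1 : (ρ * Y).trace = (P * (Uᴴ * V) * y).trace := by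
    rw [hY, hρ.e]
    calc _ = (U * (P * (Uᴴ * V) * y * Uᴴ)).trace := by simp only [Matrix.mul_assoc]; rfl
      _ = (P * (Uᴴ * V) * y * (Uᴴ * U)).trace := by
        rw [Matrix.trace_mul_comm]; simp only [Matrix.mul_assoc]
      _ = _ := by rw [hρ.l, Matrix.mul_one]
  have t2 : (σ * Y).trace = ((Uᴴ * V) * Q * y).trace := by
    rw [hY, hσ.e]
    calc _ = (V * Q * (Vᴴ * V) * y * Uᴴ).trace := by simp only [Matrix.mul_assoc]; rfl
      _ = (V * Q * y * Uᴴ).trace := by rw [hσ.l, Matrix.mul_one]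
      _ = _ := by rw [Matrix.trace_mul_comm]; simp only [Matrix.mul_assoc]
  have t3 : (σ * (Y * Yᴴ)).trace = (Q * (y * yᴴ)).trace := by
    rw [hY, hσ.e]
    simp only [conjTranspose_mul, conjTranspose_conjTranspose]
    calc _ = (V * Q * (Vᴴ * V) * y * (Uᴴ * U) * yᴴ * Vᴴ).trace := by simp only [Matrix.mul_assoc]; rfl
      _ = (V * (Q * y * yᴴ * Vᴴ)).trace := by rw [hσ.l, hρ.l]; simp only [Matrix.mul_one, Matrix.mul_assoc]
      _ = (Q * y * yᴴ * (Vᴴ * V)).trace := by rw [Matrix.trace_mul_comm]; simp only [Matrix.mul_assoc]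
      _ = _ := by rw [hσ.l]; simp only [Matrix.mul_one, Matrix.mul_assoc]
  have t4 : (ρ * (Yᴴ * Y)).trace = (P * (yᴴ * y)).trace := by
    rw [hY, hρ.e]
    simp only [conjTranspose_mul, conjTranspose_conjTranspose]
    calc _ = (U * P * (Uᴴ * U) * yᴴ * (Vᴴ * V) * y * Uᴴ).trace := by simp only [Matrix.mul_assoc]; rfl
      _ = (U * (P * yᴴ * y * Uᴴ)).trace := by rw [hσ.l, hρ.l]; simp only [Matrix.mul_one, Matrix.mul_assoc]
      _ = (P * yᴴ * y * (Uᴴ * U)).trace := by rw [Matrix.trace_mul_comm]; simp only [Matrix.mul_assoc]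
      _ = _ := by rw [hρ.l]; simp only [Matrix.mul_one, Matrix.mul_assoc]
  have s1 : (P * (Uᴴ * V) * y).trace.re = ∑ i, ∑ j, p i * ((Uᴴ * V) i j * y j i).re := by
    rw [Matrix.trace, Complex.re_sum]
    refine Finset.sum_congr rfl fun i _ => ?_
    rw [Matrix.diag_apply, Matrix.mul_apply, Complex.re_sum]
    refine Finset.sum_congr rfl fun j _ => ?_
    rw [hP, Matrix.diagonal_mul, mul_assoc, Complex.re_ofReal_mul]
  have s2 : ((Uᴴ * V) * Q * y).trace.re = ∑ i, ∑ j, q j * ((Uᴴ * V) i j * y j i).re := by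
    rw [Matrix.trace, Complex.re_sum]
    refine Finset.sum_congr rfl fun i _ => ?_
    rw [Matrix.diag_apply, Matrix.mul_apply, Complex.re_sum]
    refine Finset.sum_congr rfl fun j _ => ?_
    rw [hQ, Matrix.mul_diagonal, mul_assoc, mul_left_comm, Complex.re_ofReal_mul]
  have s3 : (Q * (y * yᴴ)).trace.re = ∑ i, ∑ j, q j * Complex.normSq (y j i) := by
    rw [Finset.sum_comm, Matrix.trace, Complex.re_sum]
    refine Finset.sum_congr rfl fun i _ => ?_
    rw [Matrix.diag_apply, hQ, Matrix.diagonal_mul, Complex.re_ofReal_mul, Matrix.mul_apply, Complex.re_sum,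
      Finset.mul_sum]
    refine Finset.sum_congr rfl fun j _ => ?_
    rw [conjTranspose_apply, ← starRingEnd_apply, Complex.mul_conj, Complex.ofReal_re]
  have s4 : (P * (yᴴ * y)).trace.re = ∑ i, ∑ j, p i * Complex.normSq (y j i) := by
    rw [Matrix.trace, Complex.re_sum]
    refine Finset.sum_congr rfl fun i _ => ?_
    rw [Matrix.diag_apply, hP, Matrix.diagonal_mul, Complex.re_ofReal_mul, Matrix.mul_apply, Complex.re_sum,
      Finset.mul_sum]
    refine Finset.sum_congr rfl fun j _ => ?_
    rw [conjTranspose_apply, mul_comm (star _), ← starRingEnd_apply, Complex.mul_conj, Complex.ofReal_re]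
  rw [Kf, Matrix.sub_mul, Matrix.trace_sub, Complex.sub_re, t1, t2, t3, t4, s1, s2, s3, s4]
  simp only [Finset.mul_sum, ← Finset.sum_sub_distrib]
  refine Finset.sum_congr rfl fun i _ => Finset.sum_congr rfl fun j _ => ?_
  ring

lemma Kf_le {ρ σ U V : Matrix ι ι ℂ} {p q : ι → ℝ} (hρ : DiagBy ρ U p) (hσ : DiagBy σ V q)
    (hp : ∀ i, 0 < p i) (hq : ∀ i, 0 < q i) (t : ℝ) (ht : 0 < t) (Y : Matrix ι ι ℂ) :
    Kf t ρ σ Y ≤ ∑ i, ∑ j, ov U V i j * ((p i - q j) ^ 2 / (t * q j + p i)) := by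
  rw [Kf_eq hρ hσ]
  refine Finset.sum_le_sum fun i _ => Finset.sum_le_sum fun j _ => ?_
  have hs : 0 < t * q j + p i := by have := hp i; have := hq j; positivity
  set s := t * q j + p i
  set d := p i - q j
  set z := (Uᴴ * V) i j with hz
  set w := (Vᴴ * Y * U) j i
  have : ov U V i j = z.re ^ 2 + z.im ^ 2 := by rw [ov, ← hz, Complex.normSq_apply]; ring
  rw [this, ← mul_div_assoc, le_div_iff₀ hs, Complex.normSq_apply, Complex.mul_re]
  nlinarith [sq_nonneg (d * z.re - s * w.re), sq_nonneg (d * z.im + s * w.im)]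

lemma Kf_attained {ρ σ U V : Matrix ι ι ℂ} {p q : ι → ℝ} (hρ : DiagBy ρ U p) (hσ : DiagBy σ V q)
    (hp : ∀ i, 0 < p i) (hq : ∀ i, 0 < q i) (t : ℝ) (ht : 0 < t) :
    ∃ Y, Kf t ρ σ Y = ∑ i, ∑ j, ov U V i j * ((p i - q j) ^ 2 / (t * q j + p i)) := by
  let y : Matrix ι ι ℂ := Matrix.of fun j i =>
    (((p i - q j) / (t * q j + p i) : ℝ) : ℂ) * star ((Uᴴ * V) i j)
  refine ⟨V * y * Uᴴ, ?_⟩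
  rw [Kf_eq hρ hσ]
  have : Vᴴ * (V * y * Uᴴ) * U = y := by
    calc _ = (Vᴴ * V) * y * (Uᴴ * U) := by simp only [Matrix.mul_assoc]
      _ = y := by rw [hρ.l, hσ.l]; simp
  rw [this]
  refine Finset.sum_congr rfl fun i _ => Finset.sum_congr rfl fun j _ => ?_
  have hs : 0 < t * q j + p i := by have := hp i; have := hq j; positivity
  have hov : ov U V i j = Complex.normSq ((Uᴴ * V) i j) := rfl
  have e1 : (Uᴴ * V) i j * y j i = (((p i - q j) / (t * q j + p i) * ov U V i j : ℝ) : ℂ) := by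
    simp only [y, Matrix.of_apply]
    rw [mul_left_comm, ← starRingEnd_apply, Complex.mul_conj, hov]
    push_cast; rfl
  have e2 : Complex.normSq (y j i) = ((p i - q j) / (t * q j + p i)) ^ 2 * ov U V i j := by
    simp only [y, Matrix.of_apply]
    rw [Complex.normSq_mul, Complex.normSq_ofReal, ← starRingEnd_apply, Complex.normSq_conj, hov]
    ring
  rw [e1, e2, Complex.ofReal_re]
  field_simp
  ring

/-- integrated form -/
noncomputable def Gm (U V : Matrix ι ι ℂ) (p q : ι → ℝ) (t : ℝ) : ℝ :=
  ∑ i, ∑ j, ov U V i j * ((p i - q j) ^ 2 / (t * q j + p i))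

lemma Gm_mul (U V : Matrix ι ι ℂ) (p q : ι → ℝ) (t : ℝ) :
    Gm U V p q t * (t / (1 + t) ^ 2) = ∑ i, ∑ j, ov U V i j * Gs (p i) (q j) t := by
  rw [Gm, Finset.sum_mul]
  refine Finset.sum_congr rfl fun i _ => ?_
  rw [Finset.sum_mul]
  refine Finset.sum_congr rfl fun j _ => ?_
  rw [Gs]; ring

lemma Gm_integrable (U V : Matrix ι ι ℂ) {p q : ι → ℝ} (hp : ∀ i, 0 < p i) (hq : ∀ i, 0 < q i) :
    IntegrableOn (fun t => Gm U V p q t * (t / (1 + t) ^ 2)) (Ioi 0) := by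
  simp_rw [Gm_mul]
  exact integrable_finsetSum _ fun i _ => integrable_finsetSum _ fun j _ =>
    (Gs_int (hp i) (hq j)).const_mul _

lemma Gm_integral (U V : Matrix ι ι ℂ) {p q : ι → ℝ} (hp : ∀ i, 0 < p i) (hq : ∀ i, 0 < q i) :
    ∫ t in Ioi 0, Gm U V p q t * (t / (1 + t) ^ 2) = ∑ i, ∑ j, ov U V i j * Fs (p i) (q j) := by
  simp_rw [Gm_mul]
  rw [integral_finsetSum _ fun i _ => integrable_finsetSum _ fun j _ =>
    (Gs_int (hp i) (hq j)).const_mul _]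
  refine Finset.sum_congr rfl fun i _ => ?_
  rw [integral_finsetSum _ fun j _ => (Gs_int (hp i) (hq j)).const_mul _]
  refine Finset.sum_congr rfl fun j _ => ?_
  rw [integral_const_mul, Gs_integral (hp i) (hq j)]

/-- positive definite state pair data -/
lemma Dr_rep {ρ σ : Matrix ι ι ℂ} (hρ : ρ.PosDef) (hσ : σ.PosDef) (ht : ρ.trace = σ.trace) :
    ∃ g : ℝ → ℝ, IntegrableOn (fun t => g t * (t / (1 + t) ^ 2)) (Ioi 0) ∧
      (∫ t in Ioi 0, g t * (t / (1 + t) ^ 2)) = Dr ρ σ ∧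
      (∀ t, 0 < t → ∀ Y, Kf t ρ σ Y ≤ g t) ∧ (∀ t, 0 < t → ∃ Y, Kf t ρ σ Y = g t) := by
  have h1 := diagBy_herm hρ.1
  have h2 := diagBy_herm hσ.1
  have p1 := h1.pos hρ
  have p2 := h2.pos hσ
  refine ⟨Gm _ _ _ _, Gm_integrable _ _ p1 p2, ?_, fun t ht Y => Kf_le h1 h2 p1 p2 t ht Y,
    fun t ht => Kf_attained h1 h2 p1 p2 t ht⟩
  rw [Gm_integral _ _ p1 p2, Dr_eq hρ.1 hσ.1 ht]

lemma Kf_sum {A : Type*} [Fintype A] (l : A → ℝ) (ρ σ : A → Matrix ι ι ℂ) (t : ℝ) (Y : Matrix ι ι ℂ) :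
    Kf t (∑ a, (l a : ℂ) • ρ a) (∑ a, (l a : ℂ) • σ a) Y = ∑ a, l a * Kf t (ρ a) (σ a) Y := by
  unfold Kf
  rw [← Finset.sum_sub_distrib]
  simp only [← smul_sub, Finset.sum_mul, Matrix.trace_sum, Complex.re_sum, Matrix.smul_mul,
    Matrix.trace_smul, smul_eq_mul, Complex.re_ofReal_mul, Finset.mul_sum, ← Finset.sum_sub_distrib]
  refine Finset.sum_congr rfl fun a _ => ?_
  ring

lemma Dr_convex {A : Type*} [Fintype A] (l : A → ℝ) (hl : ∀ a, 0 ≤ l a) (ρ σ : A → Matrix ι ι ℂ)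
    (hρ : ∀ a, (ρ a).PosDef) (hσ : ∀ a, (σ a).PosDef) (ht : ∀ a, (ρ a).trace = (σ a).trace)
    (hρ' : (∑ a, (l a : ℂ) • ρ a).PosDef) (hσ' : (∑ a, (l a : ℂ) • σ a).PosDef) :
    Dr (∑ a, (l a : ℂ) • ρ a) (∑ a, (l a : ℂ) • σ a) ≤ ∑ a, l a * Dr (ρ a) (σ a) := by
  obtain ⟨g, gi, ge, -, ga⟩ := Dr_rep hρ' hσ' (by simp [Matrix.trace_sum, Matrix.trace_smul, ht])
  choose f fi fe fl fa using fun a => Dr_rep (hρ a) (hσ a) (ht a)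
  rw [← ge]
  simp_rw [← fe, ← integral_const_mul]
  rw [← integral_finsetSum _ fun a _ => (fi a).const_mul _]
  refine setIntegral_mono_on gi (integrable_finsetSum _ fun a _ => (fi a).const_mul _)
    measurableSet_Ioi fun t ht0 => ?_
  have ht0 : 0 < t := ht0
  obtain ⟨Y, hY⟩ := ga t ht0
  simp_rw [← mul_assoc]
  rw [← Finset.sum_mul]
  refine mul_le_mul_of_nonneg_right ?_ (by positivity)
  rw [← hY, Kf_sum]
  exact Finset.sum_le_sum fun a _ => mul_le_mul_of_nonneg_left (fl a t ht0 Y) (hl a)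

lemma trace_mul_nonneg {ρ T : Matrix ι ι ℂ} (hρ : ρ.PosSemidef) (hT : T.PosSemidef) :
    0 ≤ (ρ * T).trace.re := by
  have h1 := diagBy_herm hρ.1
  have h2 := diagBy_herm hT.1
  rw [h2.e, h1.trace_mul, Complex.ofReal_re]
  exact Finset.sum_nonneg fun i _ => mul_nonneg (Finset.sum_nonneg fun j _ =>
    mul_nonneg (ov_nonneg _ _ _ _) (h1.nonneg hρ _)) (h2.nonneg hT _)

lemma trace_mul_mono {ρ S T : Matrix ι ι ℂ} (hρ : ρ.PosSemidef) (h : (T - S).PosSemidef) :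
    (ρ * S).trace.re ≤ (ρ * T).trace.re := by
  have := trace_mul_nonneg hρ h
  rw [Matrix.mul_sub, Matrix.trace_sub, Complex.sub_re] at this
  linarith

lemma trace_mul_pos {ρ T : Matrix ι ι ℂ} (hρ : ρ.PosDef) (hT : T.PosSemidef) (h0 : T ≠ 0) :
    0 < (ρ * T).trace.re := by
  have h1 := diagBy_herm hρ.1
  have h2 := diagBy_herm hT.1
  have hn : ∀ j, 0 ≤ (∑ i, ov (hρ.1.eigenvectorUnitary : Matrix ι ι ℂ) hT.1.eigenvectorUnitary i j * hρ.1.eigenvalues i) := 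
    fun j => Finset.sum_nonneg fun i _ => mul_nonneg (ov_nonneg _ _ _ _) (h1.pos hρ i).le
  have hps : ∀ j, 0 < (∑ i, ov (hρ.1.eigenvectorUnitary : Matrix ι ι ℂ) hT.1.eigenvectorUnitary i j * hρ.1.eigenvalues i) := by
    intro j
    refine lt_of_le_of_ne (hn j) fun h => ?_
    have h3 := (Finset.sum_eq_zero_iff_of_nonneg (fun i _ => mul_nonneg (ov_nonneg _ _ _ _) (h1.pos hρ i).le)).1 h.symm
    have h4 := ov_sum_left (V := (hT.1.eigenvectorUnitary : Matrix ι ι ℂ)) h1.r h2.l j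
    rw [Finset.sum_eq_zero] at h4
    · exact zero_ne_one h4
    · intro i hi
      exact (mul_eq_zero.1 (h3 i hi)).resolve_right (h1.pos hρ i).ne'
  have hex : ∃ j, hT.1.eigenvalues j ≠ 0 := by
    by_contra! hc
    apply h0
    rw [h2.e]
    simp [hc]
  obtain ⟨j, hj⟩ := hex
  conv_rhs => rw [h2.e, h1.trace_mul, Complex.ofReal_re]
  refine Finset.sum_pos' (fun j _ => mul_nonneg (hn j) (h2.nonneg hT j)) ⟨j, Finset.mem_univ _, ?_⟩
  exact mul_pos (hps j) (lt_of_le_of_ne (h2.nonneg hT j) hj.symm)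

lemma Fs_lower {p q J : ℝ} (hp : 0 < p) (hq : 0 < q) (hJ : 0 < J) :
    p * Real.log J - (J - 1) * q ≤ Fs p q := by
  have h := Real.log_le_sub_one_of_pos (x := J * q / p) (by positivity)
  rw [Real.log_div (by positivity) hp.ne', Real.log_mul hJ.ne' hq.ne'] at h
  have h2 := mul_le_mul_of_nonneg_left h hp.le
  have : p * (J * q / p - 1) = J * q - p := by field_simp
  rw [this] at h2
  rw [Fs]
  linarith

lemma sq_le_self {T : Matrix ι ι ℂ} (hT : T.PosSemidef) (hT1 : (1 - T).PosSemidef) :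
    (T - T * T).PosSemidef := by
  have h2 := diagBy_herm hT.1
  set U := (hT.1.eigenvectorUnitary : Matrix ι ι ℂ)
  have hle : ∀ i, hT.1.eigenvalues i ≤ 1 := by
    intro i
    have h := (hT1.conjTranspose_mul_mul_same U).diag_nonneg (i := i)
    rw [Matrix.mul_sub, Matrix.sub_mul, h2.conj, Matrix.mul_one, h2.l] at h
    simp at h
    have : ((0:ℝ) : ℂ) ≤ ((1 - hT.1.eigenvalues i : ℝ) : ℂ) := by push_cast; simpa using h
    have := Complex.real_le_real.1 this
    linarith
  have : T - T * T = U * Matrix.diagonal (fun i => ((hT.1.eigenvalues i - hT.1.eigenvalues i ^ 2 : ℝ) : ℂ)) * Uᴴ := by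
    have hsq : T * T = U * (Matrix.diagonal (fun i => (hT.1.eigenvalues i : ℂ)) * Matrix.diagonal (fun i => (hT.1.eigenvalues i : ℂ))) * Uᴴ := by
      conv_lhs => rw [h2.e]
      calc _ = U * Matrix.diagonal (fun i => (hT.1.eigenvalues i : ℂ)) * (Uᴴ * U) * Matrix.diagonal (fun i => (hT.1.eigenvalues i : ℂ)) * Uᴴ := by
            simp only [Matrix.mul_assoc]
        _ = _ := by rw [h2.l]; simp only [Matrix.mul_assoc, Matrix.mul_one]
    rw [hsq]
    conv_lhs => lhs; rw [h2.e]
    rw [← Matrix.sub_mul, ← Matrix.mul_sub, diagonal_mul_diagonal, diagonal_sub]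
    congr 3
    ext i
    push_cast; ring
  rw [this]
  refine PosSemidef.mul_mul_conjTranspose_same (PosSemidef.diagonal fun i => ?_) U
  have h0 := h2.nonneg hT i
  have h1 := hle i
  exact Complex.zero_le_real.2 (by nlinarith)

lemma Dr_meas {ρ σ T : Matrix ι ι ℂ} (hρ : ρ.PosDef) (hσ : σ.PosDef) (ht : ρ.trace = σ.trace)
    (hT : T.PosSemidef) (hT1 : (1 - T).PosSemidef) {J : ℝ} (hJ : 0 < J) :
    (ρ * T).trace.re * Real.log J - (J - 1) * (σ * T).trace.re ≤ Dr ρ σ := by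
  obtain ⟨g, gi, ge, gl, ga⟩ := Dr_rep hρ hσ ht
  by_cases h0 : T = 0
  · subst h0
    simp only [Matrix.mul_zero, Matrix.trace_zero, Complex.zero_re, zero_mul, mul_zero, sub_zero]
    rw [← ge]
    refine setIntegral_nonneg measurableSet_Ioi fun t ht0 => ?_
    have ht0 : 0 < t := ht0
    have := gl t ht0 0
    simp [Kf] at this
    positivity
  have hp := trace_mul_pos hρ hT h0
  have hq := trace_mul_pos hσ hT h0
  refine (Fs_lower hp hq hJ).trans ?_
  rw [← Gs_integral hp hq, ← ge]
  refine setIntegral_mono_on (Gs_int hp hq) gi measurableSet_Ioi fun t ht0 => ?_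
  have ht0 : 0 < t := ht0
  rw [Gs]
  refine mul_le_mul_of_nonneg_right ?_ (by positivity)
  set p := (ρ * T).trace.re with hpd
  set q := (σ * T).trace.re with hqd
  have hs : 0 < t * q + p := by positivity
  refine le_trans ?_ (gl t ht0 ((((p - q) / (t * q + p) : ℝ) : ℂ) • T))
  have m1 := trace_mul_mono hρ.posSemidef (sq_le_self hT hT1)
  have m2 := trace_mul_mono hσ.posSemidef (sq_le_self hT hT1)
  set a := (p - q) / (t * q + p) with ha
  have e : Kf t ρ σ ((a : ℂ) • T) = 2 * a * (p - q) - a ^ 2 * (t * (σ * (T * T)).trace.re + (ρ * (T * T)).trace.re) := by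
    unfold Kf
    simp only [conjTranspose_smul, hT.1.eq, Matrix.smul_mul, Matrix.mul_smul, Matrix.trace_smul, smul_eq_mul,
      Complex.star_def, Complex.conj_ofReal, Complex.re_ofReal_mul, Matrix.sub_mul, Matrix.trace_sub, Complex.sub_re]
    ring
  rw [e]
  have : (p - q) ^ 2 / (t * q + p) = 2 * a * (p - q) - a ^ 2 * (t * q + p) := by
    rw [ha]; field_simp; ring
  rw [this]
  have : t * (σ * (T * T)).trace.re + (ρ * (T * T)).trace.re ≤ t * q + p := by
    nlinarith
  nlinarith [mul_le_mul_of_nonneg_left this (sq_nonneg a)]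

end variational
section depol
open Matrix Filter Topology
variable {ι : Type*} [Fintype ι] [DecidableEq ι]

/-- depolarized state -/
noncomputable def dep (s : ℝ) (ρ : Matrix ι ι ℂ) : Matrix ι ι ℂ :=
  ((1 - s : ℝ) : ℂ) • ρ + ((s / Fintype.card ι : ℝ) : ℂ) • 1

lemma DiagBy.dep {ρ U : Matrix ι ι ℂ} {p : ι → ℝ} (h : DiagBy ρ U p) (s : ℝ) :
    DiagBy (dep s ρ) U (fun i => (1 - s) * p i + s / Fintype.card ι) := by
  refine ⟨h.l, h.r, ?_⟩
  have : Matrix.diagonal (fun i => (((1 - s) * p i + s / Fintype.card ι : ℝ) : ℂ)) =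
      ((1 - s : ℝ) : ℂ) • Matrix.diagonal (fun i => (p i : ℂ)) + ((s / Fintype.card ι : ℝ) : ℂ) • 1 := by
    ext i j
    by_cases hij : i = j
    · subst hij; simp
    · simp [hij]
  rw [this, Matrix.mul_add, Matrix.add_mul, Matrix.mul_smul, Matrix.smul_mul, ← h.e, Matrix.mul_smul,
    Matrix.smul_mul, Matrix.mul_one, h.r, _root_.dep]

lemma dep_sum {A : Type*} [Fintype A] {P : A → ℝ} (hP : ∑ a, P a = 1) (W : A → Matrix ι ι ℂ) (s : ℝ) :
    ∑ a, (P a : ℂ) • dep s (W a) = dep s (∑ a, (P a : ℂ) • W a) := by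
  have hP' : ∑ a, (P a : ℂ) = 1 := by exact_mod_cast hP
  unfold dep
  simp only [smul_add, Finset.sum_add_distrib, Finset.smul_sum]
  congr 1
  · exact Finset.sum_congr rfl fun a _ => smul_comm _ _ _
  · rw [← Finset.sum_smul, hP', one_smul]

lemma dep_trace [Nonempty ι] {ρ : Matrix ι ι ℂ} (h : ρ.trace = 1) (s : ℝ) : (dep s ρ).trace = 1 := by
  have : (Fintype.card ι : ℂ) ≠ 0 := by exact_mod_cast Fintype.card_ne_zero
  rw [dep, Matrix.trace_add, Matrix.trace_smul, Matrix.trace_smul, h, Matrix.trace_one]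
  simp

lemma dep_posDef [Nonempty ι] {ρ : Matrix ι ι ℂ} (h : ρ.PosSemidef) {s : ℝ} (h0 : 0 < s) (h1 : s < 1) :
    (dep s ρ).PosDef := by
  have hc : (0:ℝ) < Fintype.card ι := by exact_mod_cast Fintype.card_pos
  rw [dep, add_comm]
  refine PosDef.add_posSemidef ?_ ?_
  · exact PosDef.one.smul (Complex.zero_lt_real.2 (by positivity))
  · exact h.smul (Complex.zero_le_real.2 (by linarith))

lemma dep_vn {ρ : Matrix ι ι ℂ} (h : ρ.IsHermitian) :
    Tendsto (fun s => vnEntropy (dep s ρ)) (𝓝[>] 0) (𝓝 (vnEntropy ρ)) := by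
  have hl : Real.log 2 ≠ 0 := (Real.log_pos one_lt_two).ne'
  have hd := diagBy_herm h
  have e : ∀ s, vnEntropy (dep s ρ) = (∑ i, Real.negMulLog ((1 - s) * h.eigenvalues i + s / Fintype.card ι)) / Real.log 2 := by
    intro s
    rw [← (hd.dep s).vn]; field_simp
  have e0 : vnEntropy ρ = (∑ i, Real.negMulLog ((1 - 0) * h.eigenvalues i + 0 / Fintype.card ι)) / Real.log 2 := by
    have := hd.vn
    simp only [sub_zero, one_mul, zero_div, add_zero]
    rw [← this]; field_simp
  rw [e0]
  simp_rw [e]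
  have hc : Continuous fun s : ℝ => (∑ i, Real.negMulLog ((1 - s) * h.eigenvalues i + s / Fintype.card ι)) / Real.log 2 := by
    refine Continuous.div_const (continuous_finsetSum _ fun i _ => Real.continuous_negMulLog.comp (by fun_prop)) _
  exact (hc.tendsto 0).mono_left nhdsWithin_le_nhds

lemma sum_herm {A : Type*} [Fintype A] (P : A → ℝ) {W : A → Matrix ι ι ℂ} (hW : ∀ a, (W a).IsHermitian) :
    (∑ a, (P a : ℂ) • W a).IsHermitian := by
  rw [IsHermitian, conjTranspose_sum]
  refine Finset.sum_congr rfl fun a _ => ?_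
  rw [conjTranspose_smul, (hW a).eq]; simp

lemma sum_state {A : Type*} [Fintype A] {P : A → ℝ} (hP : IsDist P) {W : A → Matrix ι ι ℂ}
    (hW : ∀ a, IsState (W a)) : IsState (∑ a, (P a : ℂ) • W a) := by
  refine ⟨Matrix.posSemidef_sum _ fun a _ => (hW a).1.smul (Complex.zero_le_real.2 (hP.1 a)), ?_⟩
  simp only [Matrix.trace_sum, Matrix.trace_smul, (hW _).2, smul_eq_mul, mul_one]
  exact_mod_cast hP.2

lemma sum_posDef {A : Type*} [Fintype A] {P : A → ℝ} (hP : IsDist P) {W : A → Matrix ι ι ℂ}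
    (hW : ∀ a, (W a).PosDef) : (∑ a, (P a : ℂ) • W a).PosDef := by
  obtain ⟨a, ha⟩ : ∃ a, 0 < P a := by
    by_contra! hc
    have := Finset.sum_nonpos (s := Finset.univ) fun a _ => hc a
    rw [hP.2] at this; linarith
  classical
  rw [← Finset.add_sum_erase _ _ (Finset.mem_univ a)]
  refine PosDef.add_posSemidef ?_ ?_
  · exact (hW a).smul (Complex.zero_lt_real.2 ha)
  · exact Matrix.posSemidef_sum _ fun a _ => (hW a).posSemidef.smul (Complex.zero_le_real.2 (hP.1 a))

lemma dep_holevo {A : Type*} [Fintype A] {P : A → ℝ} (hP : ∑ a, P a = 1) {W : A → Matrix ι ι ℂ}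
    (hW : ∀ a, (W a).IsHermitian) :
    Tendsto (fun s => holevo P (fun a => dep s (W a))) (𝓝[>] 0) (𝓝 (holevo P W)) := by
  unfold holevo
  simp_rw [dep_sum hP]
  exact (dep_vn (sum_herm P hW)).sub (tendsto_finsetSum _ fun a _ => (dep_vn (hW a)).const_mul _)

lemma holevo_Dr {A : Type*} [Fintype A] (P : A → ℝ) {W : A → Matrix ι ι ℂ}
    (hW : ∀ a, (W a).IsHermitian) :
    holevo P W * Real.log 2 = ∑ a, P a * Dr (W a) (∑ a, (P a : ℂ) • W a) := by
  have h1 := Lg_self (sum_herm P hW)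
  set σ := ∑ a, (P a : ℂ) • W a with hσ
  have h2 : (σ * Lg σ).trace.re = ∑ a, P a * (W a * Lg σ).trace.re := by
    conv_lhs => rw [hσ]
    rw [Finset.sum_mul, Matrix.trace_sum, Complex.re_sum]
    refine Finset.sum_congr rfl fun a _ => ?_
    rw [Matrix.smul_mul, Matrix.trace_smul, smul_eq_mul, Complex.re_ofReal_mul]
  unfold Dr
  simp_rw [mul_sub]
  rw [Finset.sum_sub_distrib, ← h2, h1, holevo, ← hσ, sub_mul, Finset.sum_mul]
  simp_rw [mul_neg, Finset.sum_neg_distrib, mul_assoc]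
  ring

lemma holevo_sub_posDef {Y1 Y2 : Type*} [Fintype Y1] [Fintype Y2] {Q1 : Y1 → ℝ} {Q2 : Y2 → ℝ}
    (h1 : IsDist Q1) (h2 : IsDist Q2) {W : Y1 → Y2 → Matrix ι ι ℂ}
    (hW : ∀ y1 y2, (W y1 y2).PosDef) (ht : ∀ y1 y2, (W y1 y2).trace = 1) :
    holevo (fun q : Y1 × Y2 => Q1 q.1 * Q2 q.2) (fun q => W q.1 q.2) ≤
      ∑ y2, Q2 y2 * holevo Q1 (fun y1 => W y1 y2) + ∑ y1, Q1 y1 * holevo Q2 (fun y2 => W y1 y2) := by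
  have hl : 0 < Real.log 2 := Real.log_pos one_lt_two
  set ρ : Y1 → Matrix ι ι ℂ := fun y1 => ∑ y2, (Q2 y2 : ℂ) • W y1 y2 with hρ
  set τ : Y2 → Matrix ι ι ℂ := fun y2 => ∑ y1, (Q1 y1 : ℂ) • W y1 y2 with hτ
  have hρp : ∀ y, (ρ y).PosDef := fun y => sum_posDef h2 (hW y)
  have hτp : ∀ y, (τ y).PosDef := fun y => sum_posDef h1 fun a => hW a y
  have hτt : ∀ y, (τ y).trace = 1 := fun y => 
    (sum_state h1 fun a => (⟨(hW a y).posSemidef, ht a y⟩ : IsState _)).2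
  have hσ : ∑ y1, (Q1 y1 : ℂ) • ρ y1 = ∑ y2, (Q2 y2 : ℂ) • τ y2 := by
    simp only [hρ, hτ, Finset.smul_sum]
    rw [Finset.sum_comm]
    exact Finset.sum_congr rfl fun a _ => Finset.sum_congr rfl fun b _ => smul_comm _ _ _
  have hσ2 : ∑ q : Y1 × Y2, ((Q1 q.1 * Q2 q.2 : ℝ) : ℂ) • W q.1 q.2 = ∑ y1, (Q1 y1 : ℂ) • ρ y1 := by
    rw [Fintype.sum_prod_type]
    simp only [hρ, Finset.smul_sum, smul_smul, Complex.ofReal_mul]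
  have key : ∀ y1, Dr (ρ y1) (∑ y1, (Q1 y1 : ℂ) • ρ y1) ≤ ∑ y2, Q2 y2 * Dr (W y1 y2) (τ y2) := by
    intro y1
    rw [hσ]
    exact Dr_convex Q2 h2.1 (W y1) τ (hW y1) hτp (fun a => by rw [ht, hτt]) (hρp y1) (sum_posDef h2 hτp)
  have k1 := holevo_Dr Q1 (W := ρ) fun y => (hρp y).1
  have k2 : ∀ y2, holevo Q1 (fun y1 => W y1 y2) * Real.log 2 = ∑ y1, Q1 y1 * Dr (W y1 y2) (τ y2) :=
    fun y2 => holevo_Dr Q1 fun y => (hW y y2).1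
  have k3 : holevo Q1 ρ * Real.log 2 ≤ (∑ y2, Q2 y2 * holevo Q1 (fun y1 => W y1 y2)) * Real.log 2 := by
    rw [k1, Finset.sum_mul]
    simp_rw [mul_assoc, k2, Finset.mul_sum]
    rw [Finset.sum_comm]
    refine Finset.sum_le_sum fun y1 _ => ?_
    refine (mul_le_mul_of_nonneg_left (key y1) (h1.1 y1)).trans (le_of_eq ?_)
    rw [Finset.mul_sum]
    exact Finset.sum_congr rfl fun b _ => mul_left_comm _ _ _
  have k4 := le_of_mul_le_mul_right k3 hl
  have k5 : holevo (fun q : Y1 × Y2 => Q1 q.1 * Q2 q.2) (fun q => W q.1 q.2) =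
      holevo Q1 ρ + ∑ y1, Q1 y1 * holevo Q2 (fun y2 => W y1 y2) := by
    unfold holevo
    rw [hσ2, Fintype.sum_prod_type]
    simp_rw [mul_sub, Finset.sum_sub_distrib, Finset.mul_sum, mul_assoc]
    simp only [hρ]
    ring
  linarith

lemma holevo_sub [Nonempty ι] {Y1 Y2 : Type*} [Fintype Y1] [Fintype Y2] {Q1 : Y1 → ℝ} {Q2 : Y2 → ℝ}
    (h1 : IsDist Q1) (h2 : IsDist Q2) {W : Y1 → Y2 → Matrix ι ι ℂ}
    (hW : ∀ y1 y2, IsState (W y1 y2)) :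
    holevo (fun q : Y1 × Y2 => Q1 q.1 * Q2 q.2) (fun q => W q.1 q.2) ≤
      ∑ y2, Q2 y2 * holevo Q1 (fun y1 => W y1 y2) + ∑ y1, Q1 y1 * holevo Q2 (fun y2 => W y1 y2) := by
  have hprod : ∑ q : Y1 × Y2, Q1 q.1 * Q2 q.2 = 1 := by
    rw [Fintype.sum_prod_type]
    simp_rw [← Finset.mul_sum, h2.2, mul_one, h1.2]
  have L := dep_holevo (P := fun q : Y1 × Y2 => Q1 q.1 * Q2 q.2) hprod (W := fun q => W q.1 q.2) fun q => (hW q.1 q.2).1.1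
  have R1 := tendsto_finsetSum Finset.univ fun y2 _ => 
    (dep_holevo h1.2 (W := fun y1 => W y1 y2) fun q => (hW q y2).1.1).const_mul (Q2 y2)
  have R2 := tendsto_finsetSum Finset.univ fun y1 _ => 
    (dep_holevo h2.2 (W := fun y2 => W y1 y2) fun q => (hW y1 q).1.1).const_mul (Q1 y1)
  refine le_of_tendsto_of_tendsto L (R1.add R2) ?_
  filter_upwards [Ioo_mem_nhdsGT (zero_lt_one (α := ℝ))] with s hs
  exact holevo_sub_posDef h1 h2 (W := fun a b => dep s (W a b)) (fun a b => dep_posDef (hW a b).1 hs.1 hs.2)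
    (fun a b => dep_trace (hW a b).2 s)

lemma povm_le {M : Type*} [Fintype M] {T : M → Matrix ι ι ℂ} (hT : IsPOVM T) (m : M) :
    (1 - T m).PosSemidef := by
  classical
  have h : (1 - ∑ j, T j).PosSemidef := hT.2
  have : 1 - T m = (1 - ∑ j, T j) + ∑ j ∈ Finset.univ.erase m, T j := by
    rw [← Finset.add_sum_erase _ _ (Finset.mem_univ m)]; abel
  rw [this]
  exact h.add (Matrix.posSemidef_sum _ fun a _ => hT.1 a)

lemma unif_dist {M : Type*} [Fintype M] [Nonempty M] : IsDist (fun _ : M => (Fintype.card M : ℝ)⁻¹) := by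
  have : (Fintype.card M : ℝ) ≠ 0 := by exact_mod_cast Fintype.card_ne_zero
  exact ⟨fun _ => by positivity, by simp [this]⟩

lemma holevo_bound_posDef {M : Type*} [Fintype M] [Nonempty M] {ρ : M → Matrix ι ι ℂ}
    (hρ : ∀ m, (ρ m).PosDef) (ht : ∀ m, (ρ m).trace = 1) {T : M → Matrix ι ι ℂ} (hT : IsPOVM T) :
    ((Fintype.card M : ℝ)⁻¹ * ∑ m, (ρ m * T m).trace.re) * Real.log (Fintype.card M) - 1 ≤
      holevo (fun _ : M => (Fintype.card M : ℝ)⁻¹) ρ * Real.log 2 := by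
  rw [holevo_Dr _ fun m => (hρ m).1]
  set J : ℝ := (Fintype.card M : ℝ) with hJ
  have hJ1 : 1 ≤ J := by rw [hJ]; exact_mod_cast Fintype.card_pos
  set σ := ∑ a, ((J⁻¹ : ℝ) : ℂ) • ρ a with hσ
  have hσp : σ.PosDef := sum_posDef unif_dist hρ
  have hσt : σ.trace = 1 := (sum_state unif_dist fun a => (⟨(hρ a).posSemidef, ht a⟩ : IsState _)).2
  have h1 : ∀ m, (ρ m * T m).trace.re * Real.log J - (J - 1) * (σ * T m).trace.re ≤ Dr (ρ m) σ :=
    fun m => Dr_meas (hρ m) hσp (by rw [ht, hσt]) (hT.1 m) (povm_le hT m) (by linarith)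
  have h2 : ∑ m, (σ * T m).trace.re ≤ 1 := by
    have := trace_mul_mono hσp.posSemidef (S := ∑ m, T m) (T := 1) hT.2
    rw [Matrix.mul_one, hσt, Matrix.mul_sum, Matrix.trace_sum, Complex.re_sum] at this
    simpa using this
  rw [← Finset.mul_sum]
  have h3 := Finset.sum_le_sum fun m (_ : m ∈ Finset.univ) => h1 m
  rw [Finset.sum_sub_distrib, ← Finset.sum_mul, ← Finset.mul_sum] at h3
  have hi : 0 < J⁻¹ := by positivity
  have h4 := mul_le_mul_of_nonneg_left h3 hi.le
  have h5 : J⁻¹ * ((J - 1) * ∑ m, (σ * T m).trace.re) ≤ 1 := by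
    have : (J - 1) * ∑ m, (σ * T m).trace.re ≤ (J - 1) * 1 := mul_le_mul_of_nonneg_left h2 (by linarith)
    rw [inv_mul_le_iff₀ (by linarith)]
    linarith
  rw [mul_sub] at h4
  linarith

lemma holevo_bound [Nonempty ι] {M : Type*} [Fintype M] [Nonempty M] {ρ : M → Matrix ι ι ℂ}
    (hρ : ∀ m, IsState (ρ m)) {T : M → Matrix ι ι ℂ} (hT : IsPOVM T) :
    ((Fintype.card M : ℝ)⁻¹ * ∑ m, (ρ m * T m).trace.re) * Real.log (Fintype.card M) - 1 ≤
      holevo (fun _ : M => (Fintype.card M : ℝ)⁻¹) ρ * Real.log 2 := by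
  have R := (dep_holevo (P := fun _ : M => (Fintype.card M : ℝ)⁻¹) unif_dist.2 fun m => (hρ m).1.1).mul_const (Real.log 2)
  have c : ∀ m, Tendsto (fun s => (dep s (ρ m) * T m).trace.re) (𝓝[>] 0) (𝓝 (ρ m * T m).trace.re) := by
    intro m
    have e : ∀ s, (dep s (ρ m) * T m).trace.re = (1 - s) * (ρ m * T m).trace.re + s / Fintype.card ι * (T m).trace.re := by
      intro s
      rw [dep, Matrix.add_mul, Matrix.trace_add, Matrix.smul_mul, Matrix.smul_mul, Matrix.trace_smul, Matrix.trace_smul,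
        Matrix.one_mul, smul_eq_mul, smul_eq_mul, Complex.add_re, Complex.re_ofReal_mul, Complex.re_ofReal_mul]
    simp_rw [e]
    have hc : Continuous fun s : ℝ => (1 - s) * (ρ m * T m).trace.re + s / Fintype.card ι * (T m).trace.re := by fun_prop
    have := hc.tendsto 0
    simp only [sub_zero, one_mul, zero_div, zero_mul, add_zero] at this
    exact this.mono_left nhdsWithin_le_nhds
  have L := (((tendsto_finsetSum Finset.univ fun m _ => c m).const_mul ((Fintype.card M : ℝ)⁻¹)).mul_const 
    (Real.log (Fintype.card M : ℝ))).sub_const 1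
  refine le_of_tendsto_of_tendsto L R ?_
  filter_upwards [Ioo_mem_nhdsGT (zero_lt_one (α := ℝ))] with s hs
  exact holevo_bound_posDef (fun m => dep_posDef (hρ m).1 hs.1 hs.2) (fun m => dep_trace (hρ m).2 s) hT

end depol
section tensor
open Matrix
variable {ι : Type*} [Fintype ι] [DecidableEq ι]

lemma sum_pi_prod {R : Type*} [CommSemiring R] {n : ℕ} (f : Fin n → ι → R) :
    ∑ i : Fin n → ι, ∏ k, f k (i k) = ∏ k, ∑ x, f k x := by
  rw [Finset.prod_univ_sum, Fintype.piFinset_univ]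

lemma tensorPow_mul {n : ℕ} (A B : Fin n → Matrix ι ι ℂ) :
    tensorPow A * tensorPow B = tensorPow (fun k => A k * B k) := by
  ext i j
  simp only [tensorPow, Matrix.mul_apply, Matrix.of_apply, ← Finset.prod_mul_distrib]
  exact sum_pi_prod (fun k x => A k (i k) x * B k x (j k))

lemma tensorPow_diagonal {n : ℕ} (d : Fin n → ι → ℂ) :
    tensorPow (fun k => Matrix.diagonal (d k)) = Matrix.diagonal (fun i : Fin n → ι => ∏ k, d k (i k)) := by
  ext i j
  by_cases h : i = j
  · subst h; simp [tensorPow]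
  · rw [Matrix.diagonal_apply_ne _ h]
    obtain ⟨k, hk⟩ := Function.ne_iff.1 h
    simp only [tensorPow, Matrix.of_apply]
    exact Finset.prod_eq_zero (Finset.mem_univ k) (Matrix.diagonal_apply_ne _ hk)

lemma tensorPow_one {n : ℕ} : tensorPow (fun _ : Fin n => (1 : Matrix ι ι ℂ)) = 1 := by
  have := tensorPow_diagonal (n := n) (ι := ι) fun _ _ => 1
  simpa using this

lemma tensorPow_conjTranspose {n : ℕ} (A : Fin n → Matrix ι ι ℂ) :
    (tensorPow A)ᴴ = tensorPow (fun k => (A k)ᴴ) := by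
  ext i j
  simp [tensorPow]

lemma DiagBy.tensor {n : ℕ} {ρ U : Fin n → Matrix ι ι ℂ} {p : Fin n → ι → ℝ}
    (h : ∀ k, DiagBy (ρ k) (U k) (p k)) :
    DiagBy (tensorPow ρ) (tensorPow U) (fun i => ∏ k, p k (i k)) := by
  refine ⟨?_, ?_, ?_⟩
  · rw [tensorPow_conjTranspose, tensorPow_mul]
    simp_rw [(h _).l]; exact tensorPow_one
  · rw [tensorPow_conjTranspose, tensorPow_mul]
    simp_rw [(h _).r]; exact tensorPow_one
  · push_cast
    rw [← tensorPow_diagonal (fun k i => (p k i : ℂ)), tensorPow_conjTranspose, tensorPow_mul, tensorPow_mul]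
    congr 1
    funext k
    exact (h k).e

lemma tensor_state {n : ℕ} {ρ : Fin n → Matrix ι ι ℂ} (h : ∀ k, IsState (ρ k)) :
    IsState (tensorPow ρ) := by
  have hd := DiagBy.tensor fun k => diagBy_herm (h k).1.1
  constructor
  · rw [hd.e]
    refine PosSemidef.mul_mul_conjTranspose_same (PosSemidef.diagonal fun i => ?_) _
    exact Complex.zero_le_real.2 (Finset.prod_nonneg fun k _ => (diagBy_herm (h k).1.1).nonneg (h k).1 _)
  · simp only [Matrix.trace, tensorPow, Matrix.diag_apply, Matrix.of_apply]
    rw [sum_pi_prod (fun k x => ρ k x x)]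
    exact Finset.prod_eq_one fun k _ => (h k).2

lemma marg {n : ℕ} {a : Fin n → ι → ℝ} (ha : ∀ k, ∑ x, a k x = 1) (k0 : Fin n) (h : ι → ℝ) :
    ∑ i : Fin n → ι, (∏ k, a k (i k)) * h (i k0) = ∑ x, a k0 x * h x := by
  have e : ∀ i : Fin n → ι, (∏ k, a k (i k)) * h (i k0) = ∏ k, (a k (i k) * if k = k0 then h (i k) else 1) := by
    intro i
    rw [Finset.prod_mul_distrib, Finset.prod_ite_eq' Finset.univ k0 (fun k => h (i k)), if_pos (Finset.mem_univ _)]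
  simp_rw [e]
  rw [sum_pi_prod (fun k x => a k x * if k = k0 then h x else 1), Finset.prod_eq_single k0]
  · simp
  · intro k _ hk
    simp [hk, ha]
  · simp

lemma log_prod_mul {n : ℕ} (s : Fin n → ℝ) (r : ℝ) (h : ∀ k, s k = 0 → r = 0) :
    r * Real.log (∏ k, s k) = ∑ k, r * Real.log (s k) := by
  by_cases hr : r = 0
  · simp [hr]
  rw [Real.log_prod (fun k _ hk => hr (h k hk)), Finset.mul_sum]

lemma ent_prod {n : ℕ} {p : Fin n → ι → ℝ} (hp : ∀ k, ∑ x, p k x = 1) :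
    ∑ i : Fin n → ι, Real.negMulLog (∏ k, p k (i k)) = ∑ k, ∑ x, Real.negMulLog (p k x) := by
  unfold Real.negMulLog
  simp_rw [neg_mul, Finset.sum_neg_distrib]
  congr 1
  have : ∀ i : Fin n → ι, (∏ k, p k (i k)) * Real.log (∏ k, p k (i k)) =
      ∑ k, (∏ k, p k (i k)) * Real.log (p k (i k)) := fun i =>
    log_prod_mul _ _ fun k hk => Finset.prod_eq_zero (Finset.mem_univ k) hk
  simp_rw [this]
  rw [Finset.sum_comm]
  exact Finset.sum_congr rfl fun k _ => marg hp k fun x => Real.log (p k x)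

lemma klein {ρ U V : Matrix ι ι ℂ} {p : ι → ℝ} (h : DiagBy ρ U p) (hp : ∀ i, 0 ≤ p i) (hp1 : ∑ i, p i = 1)
    (hV1 : Vᴴ * V = 1) (hV2 : V * Vᴴ = 1) (s r : ι → ℝ) (hs : ∀ i, 0 ≤ s i) (hs1 : ∑ i, s i = 1)
    (hr : ∀ j, (Vᴴ * ρ * V) j j = (r j : ℂ)) (hrs : ∀ j, s j = 0 → r j = 0) :
    ∑ i, Real.negMulLog (p i) ≤ - ∑ j, r j * Real.log (s j) := by
  have hr' : ∀ j, r j = ∑ i, ov U V i j * p i := by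
    intro j
    have := (hr j).symm.trans (h.diag_conj j)
    exact_mod_cast this
  have e1 : ∀ f : ι → ℝ, ∑ i, ∑ j, ov U V i j * f i = ∑ i, f i := fun f => by
    simp_rw [← Finset.sum_mul, ov_sum_right h.l hV2, one_mul]
  have e2 : ∀ f : ι → ℝ, ∑ i, ∑ j, ov U V i j * f j = ∑ i, f i := fun f => by
    rw [Finset.sum_comm]
    simp_rw [← Finset.sum_mul, ov_sum_left h.r hV1, one_mul]
  have term : ∀ i j, ov U V i j * Real.negMulLog (p i) ≤
      ov U V i j * (- (p i * Real.log (s j)) - p i + s j) := by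
    intro i j
    rcases (hp i).eq_or_lt with h0 | h0
    · rw [← h0]; simp; exact mul_nonneg (ov_nonneg _ _ _ _) (hs j)
    rcases (hs j).eq_or_lt with h1 | h1
    · have h2 := hrs j h1.symm
      rw [hr'] at h2
      have h3 := (Finset.sum_eq_zero_iff_of_nonneg (fun i _ => mul_nonneg (ov_nonneg U V i j) (hp i))).1 h2 i (Finset.mem_univ _)
      rw [(mul_eq_zero.1 h3).resolve_right h0.ne']
      simp
    · refine mul_le_mul_of_nonneg_left ?_ (ov_nonneg _ _ _ _)
      have := Fs_lower h0 h1 one_pos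
      rw [Fs] at this
      rw [Real.negMulLog]
      simp at this
      linarith
  rw [← e1 (fun i => Real.negMulLog (p i))]
  refine (Finset.sum_le_sum fun i _ => Finset.sum_le_sum fun j _ => term i j).trans (le_of_eq ?_)
  have e3 : ∑ i, ∑ j, ov U V i j * (- (p i * Real.log (s j)) - p i + s j) =
      - ∑ i, ∑ j, ov U V i j * p i * Real.log (s j) - ∑ i, ∑ j, ov U V i j * p i
        + ∑ i, ∑ j, ov U V i j * s j := by
    simp only [← Finset.sum_neg_distrib, ← Finset.sum_sub_distrib, ← Finset.sum_add_distrib]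
    refine Finset.sum_congr rfl fun i _ => Finset.sum_congr rfl fun j _ => ?_
    ring
  rw [e3, e1, e2, hp1, hs1, Finset.sum_comm]
  simp_rw [hr', Finset.sum_mul]
  ring

lemma holevo_tensor {n : ℕ} {M : Type*} [Fintype M] {P : M → ℝ} (hP : IsDist P)
    {ρ : Fin n → M → Matrix ι ι ℂ} (hρ : ∀ k m, IsState (ρ k m)) :
    holevo P (fun m => tensorPow fun k => ρ k m) ≤ ∑ k, holevo P (ρ k) := by
  have hl : 0 < Real.log 2 := Real.log_pos one_lt_two
  -- entropies of products
  have hprod : ∀ m, vnEntropy (tensorPow fun k => ρ k m) = ∑ k, vnEntropy (ρ k m) := by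
    intro m
    have hd := fun k => diagBy_herm (hρ k m).1.1
    refine mul_right_cancel₀ hl.ne' ?_
    rw [(DiagBy.tensor hd).vn, Finset.sum_mul]
    simp_rw [fun k => (hd k).vn]
    refine ent_prod fun k => ?_
    exact (hd k).sum_one (hρ k m).2
  set Ω := ∑ m, (P m : ℂ) • tensorPow fun k => ρ k m with hΩ
  have hΩs : IsState Ω := sum_state hP fun m => tensor_state fun k => hρ k m
  have hσs : ∀ k, IsState (∑ m, (P m : ℂ) • ρ k m) := fun k => sum_state hP (hρ k)
  have hsub : vnEntropy Ω ≤ ∑ k, vnEntropy (∑ m, (P m : ℂ) • ρ k m) := by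
    have hd := fun k => diagBy_herm (hσs k).1.1
    set U : Fin n → Matrix ι ι ℂ := fun k => ((hσs k).1.1.eigenvectorUnitary : Matrix ι ι ℂ) with hU
    set q : Fin n → ι → ℝ := fun k => (hσs k).1.1.eigenvalues with hq
    have hdρ := fun k m => diagBy_herm (hρ k m).1.1
    have hex : ∃ r : Fin n → M → ι → ℝ, ∀ k m x, ((U k)ᴴ * ρ k m * U k) x x = (r k m x : ℂ) :=
      ⟨_, fun k m x => (hdρ k m).diag_conj x⟩
    obtain ⟨r, hr⟩ := hex
    have hrn : ∀ k m x, 0 ≤ r k m x := by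
      intro k m x
      have := ((hρ k m).1.conjTranspose_mul_mul_same (U k)).diag_nonneg (i := x)
      rw [hr] at this
      exact Complex.zero_le_real.1 this
    have hr1 : ∀ k m, ∑ x, r k m x = 1 := by
      intro k m
      have : ((U k)ᴴ * ρ k m * U k).trace = 1 := by
        rw [Matrix.trace_mul_comm, ← Matrix.mul_assoc, (hd k).r, Matrix.one_mul, (hρ k m).2]
      rw [Matrix.trace] at this
      simp only [Matrix.diag_apply, hr] at this
      exact_mod_cast this
    have hqr : ∀ k x, q k x = ∑ m, P m * r k m x := by
      intro k x
      have h1 := congrFun (congrFun (hd k).conj x) x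
      rw [Matrix.diagonal_apply_eq, Matrix.mul_sum, Matrix.sum_mul, Matrix.sum_apply] at h1
      simp only [Matrix.mul_smul, Matrix.smul_mul, Matrix.smul_apply, smul_eq_mul] at h1
      have h2 : ∑ m, (P m : ℂ) * ((U k)ᴴ * ρ k m * U k) x x = (q k x : ℂ) := h1
      simp_rw [hr] at h2
      exact_mod_cast h2.symm
    have hqn : ∀ k x, 0 ≤ q k x := fun k x => (hd k).nonneg (hσs k).1 x
    have hq1 : ∀ k, ∑ x, q k x = 1 := by
      intro k
      exact (hd k).sum_one (hσs k).2
    have hdV := DiagBy.tensor hd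
    have hdΩ := diagBy_herm hΩs.1.1
    set R : (Fin n → ι) → ℝ := fun i => ∑ m, P m * ∏ k, r k m (i k) with hR
    have hRe : ∀ i, ((tensorPow U)ᴴ * Ω * tensorPow U) i i = (R i : ℂ) := by
      intro i
      rw [hΩ, Matrix.mul_sum, Matrix.sum_mul, Matrix.sum_apply, hR]
      push_cast
      refine Finset.sum_congr rfl fun m _ => ?_
      rw [Matrix.mul_smul, Matrix.smul_mul, Matrix.smul_apply, smul_eq_mul, tensorPow_conjTranspose,
        tensorPow_mul, tensorPow_mul]
      congr 1
      simp only [tensorPow, Matrix.of_apply, hr]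
    have hR0 : ∀ i k, q k (i k) = 0 → R i = 0 := by
      intro i k h0
      rw [hqr] at h0
      have h3 := (Finset.sum_eq_zero_iff_of_nonneg (fun m _ => mul_nonneg (hP.1 m) (hrn k m _))).1 h0
      refine Finset.sum_eq_zero fun m hm => ?_
      rcases mul_eq_zero.1 (h3 m hm) with h | h
      · rw [h, zero_mul]
      · rw [Finset.prod_eq_zero (Finset.mem_univ k) h, mul_zero]
    have hk := klein hdΩ (hdΩ.nonneg hΩs.1) (hdΩ.sum_one hΩs.2) hdV.l hdV.r (fun i => ∏ k, q k (i k)) R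
        (fun i => Finset.prod_nonneg fun k _ => hqn k _)
        (by rw [sum_pi_prod]; exact Finset.prod_eq_one fun k _ => hq1 k) hRe
        (fun i h0 => by
          obtain ⟨k, -, hk⟩ := Finset.prod_eq_zero_iff.1 h0
          exact hR0 i k hk)
    refine le_of_mul_le_mul_right ?_ hl
    rw [hdΩ.vn, Finset.sum_mul]
    refine hk.trans (le_of_eq ?_)
    simp_rw [fun k => (hd k).vn, fun i => log_prod_mul (fun k => q k (i k)) (R i) (hR0 i)]
    rw [Finset.sum_comm, ← Finset.sum_neg_distrib]
    refine Finset.sum_congr rfl fun k _ => ?_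
    have : ∑ i : Fin n → ι, R i * Real.log (q k (i k)) = ∑ x, q k x * Real.log (q k x) := by
      simp only [hR, Finset.sum_mul, mul_assoc]
      rw [Finset.sum_comm]
      simp_rw [← Finset.mul_sum, fun m => marg (a := fun k x => r k m x) (fun k => hr1 k m) k (fun x => Real.log (q k x))]
      conv_rhs => enter [2, x, 1]; rw [hqr]
      simp_rw [Finset.mul_sum, Finset.sum_mul]
      rw [Finset.sum_comm]
      exact Finset.sum_congr rfl fun _ _ => Finset.sum_congr rfl fun _ _ => by ring
    rw [this, ← Finset.sum_neg_distrib]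
    refine Finset.sum_congr rfl fun x _ => ?_
    rw [Real.negMulLog, neg_mul]
  unfold holevo
  rw [Finset.sum_sub_distrib, ← hΩ]
  simp_rw [hprod, Finset.mul_sum]
  rw [Finset.sum_comm]
  linarith

end tensor

section final
open Matrix
variable {ι : Type*} [Fintype ι] [DecidableEq ι]

/-- pushforward of a distribution -/
noncomputable def push {M A : Type*} [Fintype M] (P : M → ℝ) (f : M → A) (a : A) : ℝ := by
  classical exact ∑ m, if f m = a then P m else 0

lemma push_sum {M A : Type*} [Fintype M] [Fintype A] (P : M → ℝ) (f : M → A) (g : A → ℝ) :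
    ∑ a, push P f a * g a = ∑ m, P m * g (f m) := by
  classical
  simp only [push, Finset.sum_mul]
  rw [Finset.sum_comm]
  refine Finset.sum_congr rfl fun m _ => ?_
  simp [ite_mul]

lemma push_smul {M A : Type*} [Fintype M] [Fintype A] (P : M → ℝ) (f : M → A) (g : A → Matrix ι ι ℂ) :
    ∑ a, (push P f a : ℂ) • g a = ∑ m, (P m : ℂ) • g (f m) := by
  classical
  simp only [push, Complex.ofReal_sum, Finset.sum_smul]
  rw [Finset.sum_comm]
  refine Finset.sum_congr rfl fun m _ => ?_
  rw [Finset.sum_eq_single (f m)]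
  · simp
  · intro b _ hb; simp [hb.symm]
  · simp

lemma push_dist {M A : Type*} [Fintype M] [Fintype A] {P : M → ℝ} (hP : IsDist P) (f : M → A) :
    IsDist (push P f) := by
  constructor
  · intro a
    exact Finset.sum_nonneg fun m _ => by split_ifs; exacts [hP.1 m, le_rfl]
  · have := push_sum P f fun _ => 1
    simpa [hP.2] using this

lemma push_holevo {M A : Type*} [Fintype M] [Fintype A] (P : M → ℝ) (f : M → A) (W : A → Matrix ι ι ℂ) :
    holevo (push P f) W = holevo P (fun m => W (f m)) := by
  unfold holevo
  rw [push_smul, push_sum]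

lemma push_prod {M N A B : Type*} [Fintype M] [Fintype N] (P : M → ℝ) (R : N → ℝ) (f : M → A) (g : N → B)
    (q : A × B) : push P f q.1 * push R g q.2 = push (fun m : M × N => P m.1 * R m.2) (fun m => (f m.1, g m.2)) q := by
  classical
  obtain ⟨a, b⟩ := q
  simp only [push, Finset.sum_mul_sum, Fintype.sum_prod_type, Prod.mk.injEq]
  refine Finset.sum_congr rfl fun m _ => Finset.sum_congr rfl fun k _ => ?_
  by_cases h1 : f m = a <;> by_cases h2 : g k = b <;> simp [h1, h2]

lemma pentagon {n : ℕ} (hn : 0 < n) (a b c : Fin n → ℝ) (hc : ∀ k, c k ≤ a k + b k) (r1 r2 : ℝ)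
    (h1 : n * r1 ≤ ∑ k, a k) (h2 : n * r2 ≤ ∑ k, b k) (h3 : n * (r1 + r2) ≤ ∑ k, c k) :
    ∃ x y : Fin n → ℝ, (∀ k, x k ≤ a k ∧ y k ≤ b k ∧ x k + y k ≤ c k) ∧
      ∑ k, x k = n * r1 ∧ ∑ k, y k = n * r2 := by
  have hn' : (0:ℝ) < n := by exact_mod_cast hn
  set sa := ∑ k, a k with hsa
  set sb := ∑ k, b k with hsb
  set sc := ∑ k, c k with hsc
  -- weights
  obtain ⟨l, hl0, hl1, hx, hy⟩ : ∃ l : ℝ, 0 ≤ l ∧ l ≤ 1 ∧ n * r1 ≤ l * sa + (1 - l) * (sc - sb) ∧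
      n * r2 ≤ l * (sc - sa) + (1 - l) * sb := by
    by_cases hcase : n * r1 ≤ sc - sb
    · exact ⟨0, le_rfl, zero_le_one, by linarith, by linarith⟩
    · push Not at hcase
      have hd : 0 < sa - (sc - sb) := by linarith
      have hm : (n * r1 - (sc - sb)) / (sa - (sc - sb)) * (sa - (sc - sb)) = n * r1 - (sc - sb) := by
        field_simp
      refine ⟨(n * r1 - (sc - sb)) / (sa - (sc - sb)), div_nonneg (by linarith) hd.le,
        (div_le_one hd).2 (by linarith), ?_, ?_⟩ <;> nlinarith
  refine ⟨fun k => l * a k + (1 - l) * (c k - b k) - (l * sa + (1 - l) * (sc - sb) - n * r1) / n,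
    fun k => l * (c k - a k) + (1 - l) * b k - (l * (sc - sa) + (1 - l) * sb - n * r2) / n, ?_, ?_, ?_⟩
  · intro k
    have e1 : 0 ≤ (l * sa + (1 - l) * (sc - sb) - n * r1) / n := div_nonneg (by linarith) hn'.le
    have e2 : 0 ≤ (l * (sc - sa) + (1 - l) * sb - n * r2) / n := div_nonneg (by linarith) hn'.le
    have := hc k
    have e3 : (1 - l) * (c k - b k) ≤ (1 - l) * a k := mul_le_mul_of_nonneg_left (by linarith) (by linarith)
    have e4 : l * (c k - a k) ≤ l * b k := mul_le_mul_of_nonneg_left (by linarith) (by linarith)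
    refine ⟨by nlinarith, by nlinarith, by nlinarith⟩
  · simp only [Finset.sum_sub_distrib, Finset.sum_add_distrib, ← Finset.mul_sum, Finset.sum_const,
      Finset.card_univ, Fintype.card_fin, nsmul_eq_mul, ← hsa, ← hsb, ← hsc]
    rw [mul_div_cancel₀ _ hn'.ne']; ring
  · simp only [Finset.sum_sub_distrib, Finset.sum_add_distrib, ← Finset.mul_sum, Finset.sum_const,
      Finset.card_univ, Fintype.card_fin, nsmul_eq_mul, ← hsa, ← hsb, ← hsc]
    rw [mul_div_cancel₀ _ hn'.ne']; ring

end final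
section code
open Matrix
variable {ι : Type*} [Fintype ι] [DecidableEq ι]

lemma bound_one [Nonempty ι] {Y1 Y2 M N : Type*} [Fintype Y1] [Fintype Y2] [Fintype M] [Fintype N]
    [Nonempty M] [Nonempty N] {W : Y1 → Y2 → Matrix ι ι ℂ} (hW : ∀ y1 y2, IsState (W y1 y2)) {n : ℕ}
    (u : M → Fin n → Y1) (v : N → Fin n → Y2) (D : M → N → Matrix (Fin n → ι) (Fin n → ι) ℂ)
    (hD : ∀ m2, IsPOVM fun m1 => D m1 m2) :
    ((Fintype.card N : ℝ)⁻¹ * ∑ m2, (Fintype.card M : ℝ)⁻¹ * ∑ m1,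
      (tensorPow (fun k => W (u m1 k) (v m2 k)) * D m1 m2).trace.re) * Real.log (Fintype.card M) - 1 ≤
    (∑ k, ∑ y2, push (fun _ : N => (Fintype.card N : ℝ)⁻¹) (fun m => v m k) y2 *
      holevo (push (fun _ : M => (Fintype.card M : ℝ)⁻¹) (fun m => u m k)) (fun y1 => W y1 y2)) * Real.log 2 := by
  have hl : 0 < Real.log 2 := Real.log_pos one_lt_two
  have hN := (unif_dist (M := N))
  have hM := (unif_dist (M := M))
  have key : ∀ m2, ((Fintype.card M : ℝ)⁻¹ * ∑ m1,
      (tensorPow (fun k => W (u m1 k) (v m2 k)) * D m1 m2).trace.re) * Real.log (Fintype.card M) - 1 ≤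
      (∑ k, holevo (push (fun _ : M => (Fintype.card M : ℝ)⁻¹) (fun m => u m k)) (fun y1 => W y1 (v m2 k))) * Real.log 2 := by
    intro m2
    refine (holevo_bound (ρ := fun m1 => tensorPow (fun k => W (u m1 k) (v m2 k)))
      (fun m1 => tensor_state fun k => hW _ _) (hD m2)).trans ?_
    refine mul_le_mul_of_nonneg_right ?_ hl.le
    simp_rw [push_holevo]
    exact holevo_tensor hM (ρ := fun k m1 => W (u m1 k) (v m2 k)) fun k m => hW _ _
  have h2 := Finset.sum_le_sum fun m2 (_ : m2 ∈ Finset.univ) =>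
    mul_le_mul_of_nonneg_left (key m2) (hN.1 m2)
  simp_rw [push_sum, mul_sub] at h2 ⊢
  rw [Finset.sum_sub_distrib] at h2
  have e0 : ∑ _ : N, (Fintype.card N : ℝ)⁻¹ * 1 = 1 := by simpa using hN.2
  rw [e0] at h2
  have e1 : ∀ f : N → ℝ, ((Fintype.card N : ℝ)⁻¹ * ∑ m2, f m2) * Real.log (Fintype.card M)
      = ∑ m2, (Fintype.card N : ℝ)⁻¹ * (f m2 * Real.log (Fintype.card M)) := fun f => by
    rw [Finset.mul_sum, Finset.sum_mul]
    exact Finset.sum_congr rfl fun _ _ => by ring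
  rw [e1]
  refine h2.trans (le_of_eq ?_)
  rw [Finset.sum_comm, Finset.sum_mul]
  refine Finset.sum_congr rfl fun m _ => ?_
  rw [← Finset.mul_sum]; ring

lemma bound_two [Nonempty ι] {Y1 Y2 M N : Type*} [Fintype Y1] [Fintype Y2] [Fintype M] [Fintype N]
    [Nonempty M] [Nonempty N] {W : Y1 → Y2 → Matrix ι ι ℂ} (hW : ∀ y1 y2, IsState (W y1 y2)) {n : ℕ}
    (u : M → Fin n → Y1) (v : N → Fin n → Y2) (D : M × N → Matrix (Fin n → ι) (Fin n → ι) ℂ)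
    (hD : IsPOVM D) :
    ((Fintype.card (M × N) : ℝ)⁻¹ * ∑ m : M × N,
      (tensorPow (fun k => W (u m.1 k) (v m.2 k)) * D m).trace.re) * Real.log (Fintype.card (M × N)) - 1 ≤
    (∑ k, holevo (fun q : Y1 × Y2 => push (fun _ : M => (Fintype.card M : ℝ)⁻¹) (fun m => u m k) q.1 *
      push (fun _ : N => (Fintype.card N : ℝ)⁻¹) (fun m => v m k) q.2) (fun q => W q.1 q.2)) * Real.log 2 := by
  have hl : 0 < Real.log 2 := Real.log_pos one_lt_two
  refine (holevo_bound (ρ := fun m : M × N => tensorPow (fun k => W (u m.1 k) (v m.2 k)))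
      (fun m => tensor_state fun k => hW _ _) hD).trans ?_
  refine mul_le_mul_of_nonneg_right ?_ hl.le
  refine (holevo_tensor unif_dist (ρ := fun k (m : M × N) => W (u m.1 k) (v m.2 k)) fun k m => hW _ _).trans
    (le_of_eq ?_)
  refine Finset.sum_congr rfl fun k _ => ?_
  have : (fun q : Y1 × Y2 => push (fun _ : M => (Fintype.card M : ℝ)⁻¹) (fun m => u m k) q.1 *
      push (fun _ : N => (Fintype.card N : ℝ)⁻¹) (fun m => v m k) q.2) =
      push (fun _ : M × N => (Fintype.card (M × N) : ℝ)⁻¹) (fun m => (u m.1 k, v m.2 k)) := by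
    funext q
    rw [push_prod]
    congr 1
    funext m
    rw [Fintype.card_prod]; push_cast; rw [mul_inv]
  rw [this, push_holevo]

lemma povm_fst {M N : Type*} [Fintype M] [Fintype N] {D : M × N → Matrix ι ι ℂ} (hD : IsPOVM D) (b : N) :
    IsPOVM fun a => D (a, b) := by
  classical
  refine ⟨fun a => hD.1 _, ?_⟩
  have h : (1 - ∑ j, D j).PosSemidef := hD.2
  have : 1 - ∑ a, D (a, b) = (1 - ∑ j, D j) + ∑ b' ∈ Finset.univ.erase b, ∑ a, D (a, b') := by
    rw [Fintype.sum_prod_type_right, ← Finset.add_sum_erase _ _ (Finset.mem_univ b)]; abel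
  unfold loewnerLE
  rw [this]
  exact h.add (Matrix.posSemidef_sum _ fun a _ => Matrix.posSemidef_sum _ fun _ _ => hD.1 _)

lemma povm_snd {M N : Type*} [Fintype M] [Fintype N] {D : M × N → Matrix ι ι ℂ} (hD : IsPOVM D) (a : M) :
    IsPOVM fun b => D (a, b) := by
  classical
  refine ⟨fun a => hD.1 _, ?_⟩
  have h : (1 - ∑ j, D j).PosSemidef := hD.2
  have : 1 - ∑ b, D (a, b) = (1 - ∑ j, D j) + ∑ a' ∈ Finset.univ.erase a, ∑ b, D (a', b) := by
    rw [Fintype.sum_prod_type, ← Finset.add_sum_erase _ _ (Finset.mem_univ a)]; abel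
  unfold loewnerLE
  rw [this]
  exact h.add (Matrix.posSemidef_sum _ fun a _ => Matrix.posSemidef_sum _ fun _ _ => hD.1 _)

lemma rate_bound {S L X ε R δ η n l R' : ℝ} (hl : 0 < l) (hS : 1 - ε ≤ S) (hε : ε ≤ 1) (hε0 : 0 < ε)
    (hL : 0 ≤ L) (h : S * L - 1 ≤ X * l) (hn : 0 < n) (hnl : 3 / (η * l) ≤ n) (hη : 0 < η)
    (hR : R - δ ≤ (1 / n) * (L / l)) (hδ : 0 ≤ δ) (hR' : ε * R ≤ η / 3) (hf : R' = R - δ - 2 * η / 3) :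
    n * R' ≤ X := by
  have h1 : n * (R - δ) * l ≤ L := by
    have := mul_le_mul_of_nonneg_left hR (mul_pos hn hl).le
    have e : n * l * (1 / n * (L / l)) = L := by field_simp
    rw [e] at this; linarith
  have h2 : (1 - ε) * (n * (R - δ) * l) ≤ (1 - ε) * L := mul_le_mul_of_nonneg_left h1 (by linarith)
  have h3 : (1 - ε) * L ≤ S * L := mul_le_mul_of_nonneg_right hS hL
  rw [div_le_iff₀ (by positivity)] at hnl
  have h4 : R - δ - η / 3 ≤ (1 - ε) * (R - δ) := by nlinarith [mul_nonneg hε0.le hδ]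
  have h5 := mul_le_mul_of_nonneg_left h4 (mul_pos hn hl).le
  have h6 : n * R' * l ≤ X * l := by
    rw [hf]; nlinarith
  exact le_of_mul_le_mul_right h6 hl

end code

set_option maxHeartbeats 2000000 in
/-- Converse for the classical-quantum multiple-access channel. -/
theorem mac_converse
    {Y1 Y2 ι : Type*} [Fintype Y1] [Fintype Y2] [Fintype ι] [DecidableEq ι]
    (W : Y1 → Y2 → Matrix ι ι ℂ) (hW : ∀ y1 y2, IsState (W y1 y2))
    (R1 R2 : ℝ) (hR1 : 0 ≤ R1) (hR2 : 0 ≤ R2)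
    (hach : ∀ ε : ℝ, 0 < ε → ∀ δ : ℝ, 0 < δ → ∃ N : ℕ, ∀ n : ℕ, N ≤ n →
      ∃ J1 J2 : ℕ, 1 ≤ J1 ∧ 1 ≤ J2 ∧
        R1 - δ ≤ (1 / n : ℝ) * Real.logb 2 J1 ∧
        R2 - δ ≤ (1 / n : ℝ) * Real.logb 2 J2 ∧
        MACCodeExists W n J1 J2 ε) :
    (R1, R2) ∈ closure (convexHull ℝ
      (⋃ (Q1 : Y1 → ℝ) (Q2 : Y2 → ℝ) (_ : IsDist Q1) (_ : IsDist Q2),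
        {p : ℝ × ℝ |
          p.1 ≤ ∑ y2, Q2 y2 * holevo Q1 (fun y1 => W y1 y2) ∧
          p.2 ≤ ∑ y1, Q1 y1 * holevo Q2 (fun y2 => W y1 y2) ∧
          p.1 + p.2 ≤ holevo (fun q : Y1 × Y2 => Q1 q.1 * Q2 q.2) (fun q => W q.1 q.2)})) := by
  classical
  have hl : 0 < Real.log 2 := Real.log_pos one_lt_two
  suffices H : ∀ η : ℝ, 0 < η → (R1 - η, R2 - η) ∈ convexHull ℝ
      (⋃ (Q1 : Y1 → ℝ) (Q2 : Y2 → ℝ) (_ : IsDist Q1) (_ : IsDist Q2),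
        {p : ℝ × ℝ |
          p.1 ≤ ∑ y2, Q2 y2 * holevo Q1 (fun y1 => W y1 y2) ∧
          p.2 ≤ ∑ y1, Q1 y1 * holevo Q2 (fun y2 => W y1 y2) ∧
          p.1 + p.2 ≤ holevo (fun q : Y1 × Y2 => Q1 q.1 * Q2 q.2) (fun q => W q.1 q.2)}) by
    have hc : Continuous fun η : ℝ => (R1 - η, R2 - η) := by fun_prop
    have ht : Filter.Tendsto (fun η : ℝ => (R1 - η, R2 - η)) (nhdsWithin 0 (Set.Ioi 0)) (nhds (R1, R2)) := by
      have := hc.tendsto 0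
      simp only [sub_zero] at this
      exact this.mono_left nhdsWithin_le_nhds
    refine mem_closure_of_tendsto ht ?_
    filter_upwards [self_mem_nhdsWithin] with η hη
    exact H η hη
  intro η hη
  have hRR : 0 < R1 + R2 + 1 := by linarith
  set ε := min 1 (η / (3 * (R1 + R2 + 1))) with hε
  have hε0 : 0 < ε := lt_min one_pos (by positivity)
  have hε1 : ε ≤ 1 := min_le_left _ _
  have hεR : ε * (R1 + R2 + 1) ≤ η / 3 := by
    have : ε ≤ η / (3 * (R1 + R2 + 1)) := min_le_right _ _
    rw [le_div_iff₀ (by positivity)] at this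
    linarith
  obtain ⟨N, hN⟩ := hach ε hε0 (η / 3) (by positivity)
  obtain ⟨n0, hn0⟩ := exists_nat_ge (3 / (η * Real.log 2))
  obtain ⟨n, hNn, hn0n⟩ : ∃ n : ℕ, N ≤ n ∧ n0 + 1 ≤ n := ⟨max N (n0 + 1), le_max_left _ _, le_max_right _ _⟩
  obtain ⟨J1, J2, hJ1, hJ2, hr1, hr2, u, v, D, hD, herr⟩ := hN n hNn
  have hnpos : 0 < n := lt_of_lt_of_le (Nat.succ_pos _) hn0n
  have hnl : 3 / (η * Real.log 2) ≤ (n : ℝ) :=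
    hn0.trans (by exact_mod_cast (Nat.le_succ _).trans hn0n)
  have hnp : (0 : ℝ) < n := by exact_mod_cast hnpos
  haveI : Nonempty (Fin J1) := ⟨⟨0, hJ1⟩⟩
  haveI : Nonempty (Fin J2) := ⟨⟨0, hJ2⟩⟩
  haveI : Nonempty ι := by
    by_contra hne
    rw [not_nonempty_iff] at hne
    have := (hW (u ⟨0, hJ1⟩ ⟨0, hnpos⟩) (v ⟨0, hJ2⟩ ⟨0, hnpos⟩)).2
    simp [Matrix.trace] at this
  have hJ1r : (1 : ℝ) ≤ J1 := by exact_mod_cast hJ1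
  have hJ2r : (1 : ℝ) ≤ J2 := by exact_mod_cast hJ2
  set ρ : Fin J1 × Fin J2 → Matrix (Fin n → ι) (Fin n → ι) ℂ :=
    fun m => tensorPow (fun k => W (u m.1 k) (v m.2 k)) with hρ
  have hρs : ∀ m, IsState (ρ m) := fun m => tensor_state fun k => hW _ _
  set S : ℝ := ((J1 : ℝ) * J2)⁻¹ * ∑ m, (ρ m * D m).trace.re with hS
  have hSε : 1 - ε ≤ S := by
    have e : ∀ m, ((1 - D m) * ρ m).trace.re = 1 - (ρ m * D m).trace.re := by
      intro m
      rw [Matrix.sub_mul, Matrix.one_mul, Matrix.trace_sub, (hρs m).2, Matrix.trace_mul_comm]; simp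
    have h1 : (1 / ((J1 : ℝ) * (J2 : ℝ))) * ∑ m : Fin J1 × Fin J2, ((1 - D m) * ρ m).trace.re ≤ ε := herr
    simp_rw [e] at h1
    rw [Finset.sum_sub_distrib, mul_sub, one_div, ← hS] at h1
    have h2 : ((J1 : ℝ) * J2)⁻¹ * ∑ m : Fin J1 × Fin J2, (1 : ℝ) = 1 := by
      simp
      field_simp
    linarith
  have b1 := bound_one hW u v (fun a b => D (a, b)) (fun b => povm_fst hD b)
  have b2 := bound_one (W := fun a b => W b a) (fun a b => hW b a) v u (fun b a => D (a, b)) (fun a => povm_snd hD a)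
  have b3 := bound_two hW u v D hD
  have s1 : ((Fintype.card (Fin J2) : ℝ)⁻¹ * ∑ m2, (Fintype.card (Fin J1) : ℝ)⁻¹ * ∑ m1,
      (tensorPow (fun k => W (u m1 k) (v m2 k)) * D (m1, m2)).trace.re) = S := by
    rw [hS, Fintype.sum_prod_type_right, ← Finset.mul_sum, ← mul_assoc, mul_inv, Fintype.card_fin,
      Fintype.card_fin, mul_comm (J2 : ℝ)⁻¹]
  have s2 : ((Fintype.card (Fin J1) : ℝ)⁻¹ * ∑ m1, (Fintype.card (Fin J2) : ℝ)⁻¹ * ∑ m2,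
      (tensorPow (fun k => W (u m1 k) (v m2 k)) * D (m1, m2)).trace.re) = S := by
    rw [hS, Fintype.sum_prod_type, ← Finset.mul_sum, ← mul_assoc, mul_inv, Fintype.card_fin,
      Fintype.card_fin]
  have s3 : ((Fintype.card (Fin J1 × Fin J2) : ℝ)⁻¹ * ∑ m : Fin J1 × Fin J2,
      (tensorPow (fun k => W (u m.1 k) (v m.2 k)) * D m).trace.re) = S := by
    rw [hS, Fintype.card_prod, Fintype.card_fin, Fintype.card_fin]; push_cast; rfl
  rw [s1] at b1
  rw [s2] at b2
  rw [s3] at b3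
  set Q1 : Fin n → Y1 → ℝ := fun k =>
    push (fun _ : Fin J1 => (Fintype.card (Fin J1) : ℝ)⁻¹) (fun m => u m k) with hQ1
  set Q2 : Fin n → Y2 → ℝ := fun k =>
    push (fun _ : Fin J2 => (Fintype.card (Fin J2) : ℝ)⁻¹) (fun m => v m k) with hQ2
  have hQ1d : ∀ k, IsDist (Q1 k) := fun k => push_dist unif_dist _
  have hQ2d : ∀ k, IsDist (Q2 k) := fun k => push_dist unif_dist _
  have hc1 : Real.log (Fintype.card (Fin J1) : ℝ) = Real.log J1 := by rw [Fintype.card_fin]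
  have hc2 : Real.log (Fintype.card (Fin J2) : ℝ) = Real.log J2 := by rw [Fintype.card_fin]
  have hc3 : Real.log (Fintype.card (Fin J1 × Fin J2) : ℝ) = Real.log J1 + Real.log J2 := by
    rw [Fintype.card_prod, Fintype.card_fin, Fintype.card_fin, Nat.cast_mul,
      Real.log_mul (by positivity) (by positivity)]
  rw [hc1] at b1
  rw [hc2] at b2
  rw [hc3] at b3
  clear_value S
  clear hε
  clear_value ε
  have L1 : 0 ≤ Real.log J1 := Real.log_nonneg hJ1r
  have L2 : 0 ≤ Real.log J2 := Real.log_nonneg hJ2r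
  have c1 : (n : ℝ) * (R1 - η) ≤ ∑ k, ∑ y2, Q2 k y2 * holevo (Q1 k) (fun y1 => W y1 y2) :=
    rate_bound (R := R1) (δ := η / 3) (η := η) hl hSε hε1 hε0 L1 b1 hnp hnl hη hr1 (by positivity) (by nlinarith)
      (by ring)
  have c2 : (n : ℝ) * (R2 - η) ≤ ∑ k, ∑ y1, Q1 k y1 * holevo (Q2 k) (fun y2 => W y1 y2) :=
    rate_bound (R := R2) (δ := η / 3) (η := η) hl hSε hε1 hε0 L2 b2 hnp hnl hη hr2 (by positivity) (by nlinarith)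
      (by ring)
  have c3' : (n : ℝ) * (R1 + R2 - 2 * η / 3 - 2 * η / 3) ≤
      ∑ k, holevo (fun q : Y1 × Y2 => Q1 k q.1 * Q2 k q.2) (fun q => W q.1 q.2) := by
    refine rate_bound (R := R1 + R2) (δ := 2 * η / 3) (η := η) hl hSε hε1 hε0 (add_nonneg L1 L2) b3 hnp hnl hη ?_
      (by positivity) (by nlinarith) (by ring)
    rw [add_div, mul_add]
    have h1 : R1 - η / 3 ≤ 1 / (n : ℝ) * (Real.log J1 / Real.log 2) := hr1
    have h2 : R2 - η / 3 ≤ 1 / (n : ℝ) * (Real.log J2 / Real.log 2) := hr2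
    linarith
  have c3 : (n : ℝ) * ((R1 - η) + (R2 - η)) ≤
      ∑ k, holevo (fun q : Y1 × Y2 => Q1 k q.1 * Q2 k q.2) (fun q => W q.1 q.2) := by
    refine le_trans (mul_le_mul_of_nonneg_left ?_ hnp.le) c3'
    linarith
  obtain ⟨x, y, hxy, hx, hy⟩ := pentagon hnpos _ _ _
    (fun k => holevo_sub (hQ1d k) (hQ2d k) hW) (R1 - η) (R2 - η) c1 c2 c3
  have hm : (R1 - η, R2 - η) = ∑ k : Fin n, ((n : ℝ)⁻¹) • ((x k, y k) : ℝ × ℝ) := by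
    rw [← Finset.smul_sum]
    ext
    · rw [Prod.smul_fst, Prod.fst_sum, smul_eq_mul]
      simp only [hx]; field_simp
    · rw [Prod.smul_snd, Prod.snd_sum, smul_eq_mul]
      simp only [hy]; field_simp
  rw [hm]
  refine (convex_convexHull ℝ _).sum_mem (fun _ _ => by positivity) (by simp; field_simp) fun k _ => ?_
  refine subset_convexHull ℝ _ ?_
  simp only [Set.mem_iUnion]
  exact ⟨Q1 k, Q2 k, hQ1d k, hQ2d k, hxy k⟩
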